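/- For every prime p ≥ 5 and every integer n ≥ 7, Ψ_{n-3}^p(2,1) = 5p + 30; that is, the number of isomorphism classes of regular p-groups of type (n-3, 2, 1) equals 5p + 30. -/

import Mathlib

/-- `℧_1(H) = ⟨h^p : h ∈ H⟩` for a subgroup `H`. -/
def MhoOne (p : ℕ) {P : Type} [Group P] (H : Subgroup P) : Subgroup P :=
  Subgroup.closure {y : P | ∃ x ∈ H, y = x ^ p}

/-- A `p`-group `P` is regular if for all `x y : P` there is
`z ∈ ℧_1(γ_2(⟨x,y⟩))` with `x^p * y^p = (x*y)^p * z`. -/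
def IsRegularPGroup (p : ℕ) (P : Type) [Group P] : Prop :=
  ∀ x y : P,
    ∃ z ∈ MhoOne p ⁅Subgroup.closure {x, y}, Subgroup.closure {x, y}⁆,
      x ^ p * y ^ p = (x * y) ^ p * z

/-- `Ω_i(P) = ⟨x : x^(p^i) = 1⟩`. -/
def OmegaSubgroup (p : ℕ) (P : Type) [Group P] (i : ℕ) : Subgroup P :=
  Subgroup.closure {x : P | x ^ p ^ i = 1}

/-- `ω_i(P)`, defined by `p ^ ω_i(P) = |Ω_i(P)/Ω_{i-1}(P)|`. -/
noncomputable def omegaInv (p : ℕ) (P : Type) [Group P] (i : ℕ) : ℕ :=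
  ((OmegaSubgroup p P (i - 1)).relIndex (OmegaSubgroup p P i)).factorization p

/-- `μ_j(P)` (for `j ≥ 1`): the dual partition of `(ω_1(P), ω_2(P), ...)`;
the type invariants of `P` are `μ_1(P) ≥ μ_2(P) ≥ ...`. -/
noncomputable def muInv (p : ℕ) (P : Type) [Group P] (j : ℕ) : ℕ :=
  Nat.card {i : ℕ // 1 ≤ i ∧ j ≤ omegaInv p P i}

/-- `P` has type invariants given by the list `l`. -/
def HasTypeInvariants (p : ℕ) (P : Type) [Group P] (l : List ℕ) : Prop :=
  ∀ i : ℕ, muInv p P (i + 1) = l.getD i 0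

/-- The multiplication extracted from a group structure. -/
def mulOfGroup (G : Type) (s : Group G) : Mul G := by letI := s; infer_instance

/-- The number of isomorphism classes of groups of order `N` whose group structure
satisfies the predicate `Q`. -/
noncomputable def groupClassCount (N : ℕ) (Q : Group (Fin N) → Prop) : ℕ :=
  Nat.card (Quot fun s t : {s : Group (Fin N) // Q s} =>
    Nonempty (@MulEquiv (Fin N) (Fin N) (mulOfGroup _ s.1) (mulOfGroup _ t.1)))

/-- `Ψ_e^p(λ)`: the number of isomorphism classes of regular `p`-groups of type
`(e, λ_1, ..., λ_k)`; such a group has order `p ^ (e + λ_1 + ... + λ_k)`. -/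
noncomputable def PsiType (p e : ℕ) (l : List ℕ) : ℕ :=
  groupClassCount (p ^ (e + l.sum)) fun s =>
    letI := s
    IsRegularPGroup p (Fin (p ^ (e + l.sum))) ∧
      HasTypeInvariants p (Fin (p ^ (e + l.sum))) (e :: l)

/-! A regular `p`-group `P` of type `(e, 2, 1)` with `4 ≤ e` is generated by its subgroup `Ω₂`,
of order `p ^ 5`, and an element `a` of order `p ^ e`. The central element `z = a ^ p ^ (e - 2)`
of `Ω₂` is completed to generators `z`, `b`, `c` of orders `p ^ 2`, `p ^ 2`, `p`, and `⁅b, c⁆`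
lies in the subgroup generated by `z ^ p` and `b ^ p`; its two exponents are the parameters `i`
and `j`. The action of `a` on `Ω₂` fixes `z` and is given by five further parameters `x`, `f`,
`y`, `g`, `w`, whose only constraint is that `p` divides `x j`. Conversely, every such choice of
parameters defines a group of type `(e, 2, 1)`, and it is regular because it satisfies
`g ^ p * h ^ p = (g * h) ^ p * ⁅g, h⁆ ^ (p (p - 1) / 2)`.

Two choices of parameters give isomorphic groups exactly when they differ by a choice of
generators of `Ω₂` and by replacing `a` with some `n₀ * a ^ k` for `n₀` in `Ω₂`, which amounts to
a system of polynomial equations over the prime field. The orbits number `3 p + 8` with `x` a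
unit (and hence `j = 0`), `2 p + 1` with `p ∣ x` and `j ≠ 0`, and `21` with `p ∣ x` and `j = 0`.
-/

section Regular

variable {p : ℕ} {G H : Type} [Group G] [Group H]

theorem map_mhoOne (f : G →* H) (K : Subgroup G) :
    (MhoOne p K).map f = MhoOne p (K.map f) := by
  rw [MhoOne, MhoOne, MonoidHom.map_closure]
  congr 1
  ext y
  constructor
  · rintro ⟨_, ⟨x, hx, rfl⟩, rfl⟩
    exact ⟨f x, ⟨x, hx, rfl⟩, map_pow f x p⟩
  · rintro ⟨_, ⟨x, hx, rfl⟩, rfl⟩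
    exact ⟨x ^ p, ⟨x, hx, rfl⟩, map_pow f x p⟩

theorem map_mhoOne_commutator_closure_pair (f : G →* H) (x y : G) :
    (MhoOne p ⁅Subgroup.closure {x, y}, Subgroup.closure {x, y}⁆).map f =
      MhoOne p ⁅Subgroup.closure {f x, f y}, Subgroup.closure {f x, f y}⁆ := by
  rw [map_mhoOne, Subgroup.map_commutator, MonoidHom.map_closure, Set.image_pair]

theorem IsRegularPGroup.of_surjective {f : G →* H} (hf : Function.Surjective f)
    (hG : IsRegularPGroup p G) : IsRegularPGroup p H := by
  intro x y
  obtain ⟨x, rfl⟩ := hf x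
  obtain ⟨y, rfl⟩ := hf y
  obtain ⟨z, hz, hxy⟩ := hG x y
  refine ⟨f z, ?_, ?_⟩
  · rw [← map_mhoOne_commutator_closure_pair]
    exact Subgroup.mem_map_of_mem f hz
  · rw [← map_pow, ← map_pow, ← map_mul, hxy, map_mul, map_pow, map_mul]

theorem IsRegularPGroup.of_injective {f : G →* H} (hf : Function.Injective f)
    (hH : IsRegularPGroup p H) : IsRegularPGroup p G := by
  intro x y
  obtain ⟨z, hz, hxy⟩ := hH (f x) (f y)
  rw [← map_mhoOne_commutator_closure_pair] at hz
  obtain ⟨z, hz, rfl⟩ := hz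
  exact ⟨z, hz, hf (by simpa only [map_mul, map_pow] using hxy)⟩

theorem exists_normal_ne_top_mem [Fact p.Prime] [Finite G] (hG : IsPGroup p G)
    (hcomm : ¬ IsMulCommutative G) (v : G) : ∃ M : Subgroup G, M.Normal ∧ M ≠ ⊤ ∧ v ∈ M := by
  have hv : Subgroup.zpowers v ≠ ⊤ := by
    intro hv
    have : IsCyclic G := isCyclic_iff_exists_zpowers_eq_top.2 ⟨v, hv⟩
    exact hcomm inferInstance
  obtain ⟨M, hM, hvM⟩ := (eq_top_or_exists_le_coatom (Subgroup.zpowers v)).resolve_left hv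
  have : Group.IsNilpotent G := hG.isNilpotent
  have hnormal : M.Normal :=
    Subgroup.NormalizerCondition.normal_of_coatom M Group.normalizerCondition_of_isNilpotent hM
  exact ⟨M, hnormal, hM.1, hvM (Subgroup.mem_zpowers v)⟩

theorem commutator_le_of_closure_pair_eq_top {v g : G} (hgen : Subgroup.closure {v, g} = ⊤)
    (K : Subgroup G) [K.Normal] (hvg : v⁻¹ * (g * v * g⁻¹) ∈ K) :
    ⁅(⊤ : Subgroup G), (⊤ : Subgroup G)⁆ ≤ K := by
  have hgen' : Subgroup.closure {(v : G ⧸ K), (g : G ⧸ K)} = ⊤ := by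
    rw [← Subgroup.map_top_of_surjective _ (QuotientGroup.mk'_surjective K), ← hgen,
      MonoidHom.map_closure, Set.image_pair]
    rfl
  have hcomm : (v : G ⧸ K) * g = g * v := by
    have h := (QuotientGroup.eq_one_iff _).2 hvg
    rw [QuotientGroup.mk_mul, QuotientGroup.mk_inv, inv_mul_eq_one] at h
    exact eq_mul_inv_iff_mul_eq.1 h
  have htop : IsMulCommutative (⊤ : Subgroup (G ⧸ K)) := by
    rw [← hgen']
    apply Subgroup.isMulCommutative_closure
    rintro x (rfl | rfl) y (rfl | rfl) <;> simp only [hcomm]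
  rw [Subgroup.commutator_le]
  intro a _ b _
  rw [← QuotientGroup.eq_one_iff]
  exact commutatorElement_eq_one_iff_mul_comm.2
    (setLike_mul_comm (Subgroup.mem_top (a : G ⧸ K)) (Subgroup.mem_top (b : G ⧸ K)))

/-- The elements of `M` killed by `n`, for a subgroup `M` in which `x ^ n = y ^ n` forces
`(x⁻¹ * y) ^ n = 1`. -/
def powKernel (n : ℕ) (M : Subgroup G)
    (hM : ∀ x ∈ M, ∀ y ∈ M, x ^ n = y ^ n → (x⁻¹ * y) ^ n = 1) : Subgroup G where
  carrier := {w | w ∈ M ∧ w ^ n = 1}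
  one_mem' := ⟨M.one_mem, one_pow n⟩
  mul_mem' := by
    rintro a b ⟨ha, han⟩ ⟨hb, hbn⟩
    refine ⟨M.mul_mem ha hb, ?_⟩
    simpa using hM a⁻¹ (M.inv_mem ha) b hb (by rw [inv_pow, han, hbn, inv_one])
  inv_mem' := fun ⟨ha, han⟩ => ⟨M.inv_mem ha, by rw [inv_pow, han, inv_one]⟩

theorem powKernel_normal {n : ℕ} {M : Subgroup G} [M.Normal]
    (hM : ∀ x ∈ M, ∀ y ∈ M, x ^ n = y ^ n → (x⁻¹ * y) ^ n = 1) : (powKernel n M hM).Normal where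
  conj_mem := fun a ⟨ha, han⟩ g =>
    ⟨Subgroup.Normal.conj_mem ‹_› a ha g, by rw [conj_pow, han, mul_one, mul_inv_cancel]⟩

theorem eq_one_of_mem_mhoOne_commutator {M : Subgroup G} [hM : M.Normal]
    (hpow : ∀ x ∈ M, ∀ y ∈ M, x ^ p = y ^ p → (x⁻¹ * y) ^ p = 1)
    {v g : G} (hv : v ∈ M) (hgen : Subgroup.closure {v, g} = ⊤)
    (hvg : Commute g (v ^ p)) {z : G}
    (hz : z ∈ MhoOne p ⁅(⊤ : Subgroup G), (⊤ : Subgroup G)⁆) : z = 1 := by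
  have hgvM : g * v * g⁻¹ ∈ M := hM.conj_mem v hv g
  have := powKernel_normal hpow
  have hle : ⁅(⊤ : Subgroup G), (⊤ : Subgroup G)⁆ ≤ powKernel p M hpow :=
    commutator_le_of_closure_pair_eq_top hgen _
      ⟨M.mul_mem (M.inv_mem hv) hgvM, hpow v hv _ hgvM (by rw [conj_pow, mul_inv_eq_of_eq_mul hvg])⟩
  have hbot : MhoOne p ⁅(⊤ : Subgroup G), (⊤ : Subgroup G)⁆ ≤ ⊥ := by
    rw [MhoOne, Subgroup.closure_le]
    rintro _ ⟨x, hx, rfl⟩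
    exact (hle hx).2
  exact Subgroup.mem_bot.1 (hbot hz)

theorem IsRegularPGroup.pow_eq_pow_iff_of_closure_pair_eq_top [Fact p.Prime] [Finite G]
    (hG : IsPGroup p G) (hreg : IsRegularPGroup p G)
    (hproper : ∀ M : Subgroup G, M ≠ ⊤ → ∀ x ∈ M, ∀ y ∈ M, x ^ p = y ^ p → (x⁻¹ * y) ^ p = 1)
    {x y : G} (hxy : Subgroup.closure {x, y} = ⊤) :
    x ^ p = y ^ p ↔ (x⁻¹ * y) ^ p = 1 := by
  by_cases hcomm : IsMulCommutative G
  · rw [Commute.mul_pow (mul_comm' _ _), inv_pow, inv_mul_eq_one]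
  have hx : Subgroup.closure {x, x⁻¹ * y} = ⊤ := by
    rw [← hxy]
    apply Subgroup.closure_eq_of_le
    · rintro w (rfl | rfl)
      · exact Subgroup.subset_closure (by simp)
      · exact mul_mem (inv_mem (Subgroup.subset_closure (by simp)))
          (Subgroup.subset_closure (by simp))
    · rw [Subgroup.closure_le]
      rintro w (rfl | rfl)
      · exact Subgroup.subset_closure (by simp)
      · rw [← mul_inv_cancel_left x w]
        exact mul_mem (Subgroup.subset_closure (by simp)) (Subgroup.subset_closure (by simp))
  constructor
  · intro h
    obtain ⟨M, hM, hMtop, hxM⟩ := exists_normal_ne_top_mem hG hcomm x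
    obtain ⟨z, hz, hmul⟩ := hreg x (x⁻¹ * y)
    rw [hx] at hz
    have hxyx : Commute (x⁻¹ * y) (x ^ p) :=
      (Commute.self_pow x p).inv_left.mul_left (h ▸ Commute.self_pow y p)
    rw [eq_one_of_mem_mhoOne_commutator (hproper M hMtop) hxM hx hxyx hz,
      mul_one, mul_inv_cancel_left, ← h] at hmul
    exact mul_eq_left.1 hmul
  · intro h
    obtain ⟨M, hM, hMtop, hxyM⟩ := exists_normal_ne_top_mem hG hcomm (x⁻¹ * y)
    obtain ⟨z, hz, hmul⟩ := hreg x (x⁻¹ * y)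
    rw [hx] at hz
    rw [eq_one_of_mem_mhoOne_commutator (hproper M hMtop) hxyM (Set.pair_comm x _ ▸ hx)
      (h ▸ Commute.one_right x) hz, h, mul_one, mul_one, mul_inv_cancel_left] at hmul
    exact hmul

end Regular

section Omega

variable {p : ℕ} {G : Type} [Group G]

theorem IsRegularPGroup.pow_eq_pow_iff [Fact p.Prime] [Finite G] (hreg : IsRegularPGroup p G)
    (hG : IsPGroup p G) (x y : G) : x ^ p = y ^ p ↔ (x⁻¹ * y) ^ p = 1 := by
  induction hn : Nat.card G using Nat.strong_induction_on generalizing G with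
  | _ n ih =>
    have hproper : ∀ M : Subgroup G, M ≠ ⊤ → ∀ x ∈ M, ∀ y ∈ M,
        (x ^ p = y ^ p ↔ (x⁻¹ * y) ^ p = 1) := by
      intro M hM x hx y hy
      have hlt : Nat.card M < n := hn ▸ lt_of_le_of_ne (Subgroup.card_le_card_group M)
        (mt (Subgroup.eq_top_of_card_eq M) hM)
      simpa only [Subtype.ext_iff, Subgroup.coe_pow, Subgroup.coe_mul, Subgroup.coe_inv,
        Subgroup.coe_one] using
        ih _ hlt (hreg.of_injective M.subtype_injective) (hG.to_subgroup M) ⟨x, hx⟩ ⟨y, hy⟩ rfl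
    by_cases hxy : Subgroup.closure {x, y} = ⊤
    · exact hreg.pow_eq_pow_iff_of_closure_pair_eq_top hG
        (fun M hM x hx y hy => (hproper M hM x hx y hy).1) hxy
    · exact hproper _ hxy x (Subgroup.subset_closure (by simp)) y
        (Subgroup.subset_closure (by simp))

theorem IsRegularPGroup.pow_pow_eq_pow_pow_iff [Fact p.Prime] [Finite G]
    (hreg : IsRegularPGroup p G) (hG : IsPGroup p G) (i : ℕ) (x y : G) :
    x ^ p ^ i = y ^ p ^ i ↔ (x⁻¹ * y) ^ p ^ i = 1 := by
  induction i generalizing G with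
  | zero => simp only [pow_zero, pow_one, inv_mul_eq_one]
  | succ i ih =>
    let K := powKernel p (⊤ : Subgroup G) fun x _ y _ => (hreg.pow_eq_pow_iff hG x y).1
    have hK : K.Normal := powKernel_normal _
    have mem_K (w : G) : w ∈ K ↔ w ^ p = 1 := and_iff_right (Subgroup.mem_top w)
    have h := ih (hreg.of_surjective (QuotientGroup.mk'_surjective K)) (hG.to_quotient K)
      (x : G ⧸ K) y
    simp only [← QuotientGroup.mk_pow, ← QuotientGroup.mk_inv, ← QuotientGroup.mk_mul] at h
    rw [QuotientGroup.eq, QuotientGroup.eq_one_iff, mem_K, mem_K, ← hreg.pow_eq_pow_iff hG] at h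
    simpa only [pow_succ, pow_mul] using h

theorem IsRegularPGroup.commute_pow_pow_iff [Fact p.Prime] [Finite G]
    (hreg : IsRegularPGroup p G) (hG : IsPGroup p G) (i : ℕ) (x y : G) :
    Commute x (y ^ p ^ i) ↔ (y⁻¹ * (x * y * x⁻¹)) ^ p ^ i = 1 := by
  rw [← hreg.pow_pow_eq_pow_pow_iff hG, conj_pow, eq_mul_inv_iff_mul_eq, eq_comm]
  rfl

theorem IsRegularPGroup.mem_omegaSubgroup [Fact p.Prime] [Finite G] (hreg : IsRegularPGroup p G)
    (hG : IsPGroup p G) {i : ℕ} {x : G} : x ∈ OmegaSubgroup p G i ↔ x ^ p ^ i = 1 := by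
  refine ⟨fun hx => ?_, fun hx => Subgroup.subset_closure hx⟩
  have hle : OmegaSubgroup p G i ≤ powKernel (p ^ i) ⊤ fun x _ y _ =>
      (hreg.pow_pow_eq_pow_pow_iff hG i x y).1 :=
    (Subgroup.closure_le _).2 fun _ hw => ⟨Subgroup.mem_top _, hw⟩
  exact (hle hx).2

theorem IsRegularPGroup.omegaSubgroup_normal [Fact p.Prime] [Finite G]
    (hreg : IsRegularPGroup p G) (hG : IsPGroup p G) (i : ℕ) : (OmegaSubgroup p G i).Normal where
  conj_mem x hx g := by
    rw [hreg.mem_omegaSubgroup hG] at hx ⊢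
    rw [conj_pow, hx, mul_one, mul_inv_cancel]

theorem omegaSubgroup_zero : OmegaSubgroup p G 0 = ⊥ := by
  simp [OmegaSubgroup]

theorem omegaSubgroup_mono : Monotone (OmegaSubgroup p G) := fun i j hij =>
  Subgroup.closure_mono fun x (hx : x ^ p ^ i = 1) => by
    obtain ⟨k, rfl⟩ := Nat.exists_eq_add_of_le hij
    rw [Set.mem_ofPred_eq, pow_add, pow_mul, hx, one_pow]

theorem relIndex_eq_pow_omegaInv [hp : Fact p.Prime] [Finite G] (hG : IsPGroup p G) (i : ℕ) :
    (OmegaSubgroup p G (i - 1)).relIndex (OmegaSubgroup p G i) = p ^ omegaInv p G i := by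
  obtain ⟨n, hn⟩ := (hG.to_subgroup (OmegaSubgroup p G i)).exists_card_eq
  obtain ⟨k, -, hk⟩ := (Nat.dvd_prime_pow hp.out).1
    (hn ▸ Subgroup.relIndex_dvd_card (OmegaSubgroup p G (i - 1)) (OmegaSubgroup p G i))
  rw [omegaInv, hk, hp.out.factorization_pow, Finsupp.single_eq_same]

theorem card_omegaSubgroup_succ [Fact p.Prime] [Finite G] (hG : IsPGroup p G) (i : ℕ) :
    Nat.card (OmegaSubgroup p G (i + 1)) =
      p ^ omegaInv p G (i + 1) * Nat.card (OmegaSubgroup p G i) := by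
  rw [← relIndex_eq_pow_omegaInv hG, mul_comm, Nat.add_sub_cancel]
  simpa only [Subgroup.relIndex_bot_left] using
    (Subgroup.relIndex_mul_relIndex ⊥ _ _ bot_le (omegaSubgroup_mono i.le_succ)).symm

theorem omegaInv_eq_of_card [hp : Fact p.Prime] [Finite G] (hG : IsPGroup p G) {i s t : ℕ}
    (hi : Nat.card (OmegaSubgroup p G i) = p ^ s)
    (hi' : Nat.card (OmegaSubgroup p G (i + 1)) = p ^ (s + t)) : omegaInv p G (i + 1) = t := by
  rw [card_omegaSubgroup_succ hG, hi, ← pow_add, add_comm s] at hi'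
  exact Nat.add_right_cancel (Nat.pow_right_injective hp.out.two_le hi')

/-- The `p`-th power map induces an injection from the cosets of `Ω_{i+1}` in `Ω_{i+2}` to those of
`Ω_i` in `Ω_{i+1}`. -/
theorem IsRegularPGroup.omegaInv_succ_le [hp : Fact p.Prime] [Finite G]
    (hreg : IsRegularPGroup p G) (hG : IsPGroup p G) (i : ℕ) :
    omegaInv p G (i + 2) ≤ omegaInv p G (i + 1) := by
  have hpow (x : OmegaSubgroup p G (i + 2)) : (x : G) ^ p ∈ OmegaSubgroup p G (i + 1) := by
    rw [hreg.mem_omegaSubgroup hG, ← pow_mul, ← pow_succ']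
    exact (hreg.mem_omegaSubgroup hG).1 x.2
  have hcoset (x y : G) :
      x⁻¹ * y ∈ OmegaSubgroup p G (i + 1) ↔ (x ^ p)⁻¹ * y ^ p ∈ OmegaSubgroup p G i := by
    rw [hreg.mem_omegaSubgroup hG, hreg.mem_omegaSubgroup hG, ← hreg.pow_pow_eq_pow_pow_iff hG,
      ← hreg.pow_pow_eq_pow_pow_iff hG, pow_succ', pow_mul, pow_mul]
  have hle : (OmegaSubgroup p G (i + 1)).relIndex (OmegaSubgroup p G (i + 2)) ≤
      (OmegaSubgroup p G i).relIndex (OmegaSubgroup p G (i + 1)) := by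
    refine Nat.card_le_card_of_injective
      (Quotient.map' (fun x => ⟨(x : G) ^ p, hpow x⟩) fun x y hxy => ?_) fun x y => ?_
    · rw [QuotientGroup.leftRel_apply] at hxy ⊢
      exact (hcoset x y).1 hxy
    · refine Quotient.inductionOn₂' x y fun x y hxy => Quotient.sound' ?_
      have hxy := Quotient.exact' hxy
      rw [QuotientGroup.leftRel_apply] at hxy ⊢
      exact (hcoset x y).2 hxy
  have h₂ := relIndex_eq_pow_omegaInv (p := p) hG (i + 2)
  have h₁ := relIndex_eq_pow_omegaInv (p := p) hG (i + 1)
  simp only [Nat.add_succ_sub_one, add_zero] at h₁ h₂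
  rwa [h₁, h₂, Nat.pow_le_pow_iff_right hp.out.one_lt] at hle

end Omega

section TypeInvariants

theorem mem_iff_lt_ncard_of_isLowerSet {S : Set ℕ} (hS : IsLowerSet S) (hfin : S.Finite) {i : ℕ} :
    i ∈ S ↔ i < S.ncard := by
  obtain rfl | ⟨n, rfl⟩ := hS.eq_univ_or_Iio
  · exact (Set.infinite_univ hfin).elim
  · rw [Set.mem_Iio, Set.ncard_eq_toFinset_card', Set.toFinset_Iio, Nat.card_Iio]

variable {p : ℕ} {G : Type} [Group G]

theorem muInv_eq_ncard (j : ℕ) : muInv p G j = {i : ℕ | j ≤ omegaInv p G (i + 1)}.ncard :=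
  Nat.card_congr
    { toFun := fun i => ⟨i - 1, by
        simpa only [Set.mem_ofPred_eq, Nat.sub_add_cancel i.2.1] using i.2.2⟩
      invFun := fun i => ⟨i + 1, Nat.le_add_left 1 i, i.2⟩
      left_inv := fun i => Subtype.ext (Nat.sub_add_cancel i.2.1)
      right_inv := fun _ => rfl }

variable [hp : Fact p.Prime] [Finite G]

theorem omegaSubgroup_eq_top (hG : IsPGroup p G) : ∃ n, ∀ i ≥ n, OmegaSubgroup p G i = ⊤ := by
  obtain ⟨n, hn⟩ := hG.exists_card_eq
  refine ⟨n, fun i hi => top_le_iff.1 fun x _ => omegaSubgroup_mono hi ?_⟩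
  exact Subgroup.subset_closure (by rw [Set.mem_ofPred_eq, ← hn, pow_card_eq_one'])

theorem IsRegularPGroup.lt_muInv_iff (hreg : IsRegularPGroup p G) (hG : IsPGroup p G) {i j : ℕ}
    (hj : 1 ≤ j) : i < muInv p G j ↔ j ≤ omegaInv p G (i + 1) := by
  have hanti : Antitone fun i => omegaInv p G (i + 1) :=
    antitone_nat_of_succ_le (hreg.omegaInv_succ_le hG)
  have hfin : {i : ℕ | j ≤ omegaInv p G (i + 1)}.Finite := by
    obtain ⟨n, hn⟩ := omegaSubgroup_eq_top hG
    refine (Set.finite_Iio n).subset fun i hi => Set.mem_Iio.2 (lt_of_not_ge fun hni => ?_)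
    have h0 : omegaInv p G (i + 1) = 0 := by
      simp only [omegaInv, Nat.add_sub_cancel, hn i hni, hn (i + 1) (by omega)]
      simp
    rw [Set.mem_ofPred_eq, h0] at hi
    omega
  have hlower : IsLowerSet {i : ℕ | j ≤ omegaInv p G (i + 1)} :=
    fun a b hba ha => le_trans ha (hanti hba)
  rw [muInv_eq_ncard, ← mem_iff_lt_ncard_of_isLowerSet hlower hfin, Set.mem_ofPred_eq]

theorem IsRegularPGroup.hasTypeInvariants_iff (hreg : IsRegularPGroup p G) (hG : IsPGroup p G)
    {l : List ℕ} :
    HasTypeInvariants p G l ↔ ∀ i j, j < omegaInv p G (i + 1) ↔ i < l.getD j 0 := by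
  constructor
  · intro h i j
    rw [← h j, hreg.lt_muInv_iff hG (Nat.le_add_left 1 j), Nat.succ_le_iff]
  · intro h j
    refine eq_of_forall_lt_iff fun i => ?_
    rw [← h, hreg.lt_muInv_iff hG (Nat.le_add_left 1 j), Nat.succ_le_iff]

theorem IsRegularPGroup.card_omegaSubgroup_of_hasTypeInvariants (hreg : IsRegularPGroup p G)
    (hG : IsPGroup p G) {e : ℕ} (h : HasTypeInvariants p G [e, 2, 1]) :
    Nat.card (OmegaSubgroup p G 1) = p ^ 3 ∧ Nat.card (OmegaSubgroup p G 2) = p ^ 5 := by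
  have hiff := (hreg.hasTypeInvariants_iff hG).1 h
  have hω₁ : omegaInv p G 1 = 3 := by
    have h₂ := hiff 0 2
    have h₃ := hiff 0 3
    simp at h₂ h₃
    omega
  have hω₂ : omegaInv p G 2 = 2 := by
    have h₁ := hiff 1 1
    have h₂ := hiff 1 2
    simp at h₁ h₂
    omega
  have hcard₁ : Nat.card (OmegaSubgroup p G 1) = p ^ 3 := by
    rw [card_omegaSubgroup_succ hG, hω₁, omegaSubgroup_zero, Subgroup.card_bot, mul_one]
  refine ⟨hcard₁, ?_⟩
  rw [card_omegaSubgroup_succ hG, hω₂, hcard₁, ← pow_add]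

theorem IsRegularPGroup.exists_orderOf_eq_of_hasTypeInvariants (hreg : IsRegularPGroup p G)
    (hG : IsPGroup p G) {e : ℕ} {l : List ℕ} (h : HasTypeInvariants p G ((e + 1) :: l)) :
    ∃ a : G, orderOf a = p ^ (e + 1) := by
  have hω : 0 < omegaInv p G (e + 1) := ((hreg.hasTypeInvariants_iff hG).1 h e 0).2 e.lt_succ_self
  by_contra! hne
  have hle : OmegaSubgroup p G (e + 1) ≤ OmegaSubgroup p G e := fun a ha => by
    rw [hreg.mem_omegaSubgroup hG] at ha ⊢
    by_contra hae
    exact hne a (orderOf_eq_prime_pow hae ha)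
  have hone := relIndex_eq_pow_omegaInv hG (e + 1)
  rw [Nat.add_sub_cancel, Subgroup.relIndex_eq_one.2 hle] at hone
  exact (Nat.one_lt_pow hω.ne' hp.out.one_lt).ne hone

theorem IsRegularPGroup.hasTypeInvariants_of_card_omegaSubgroup (hreg : IsRegularPGroup p G)
    (hG : IsPGroup p G) {e : ℕ} (he : 3 ≤ e) (h₁ : Nat.card (OmegaSubgroup p G 1) = p ^ 3)
    (h₂ : ∀ i, 2 ≤ i → i ≤ e → Nat.card (OmegaSubgroup p G i) = p ^ (i + 3))
    (h₃ : ∀ i, e ≤ i → Nat.card (OmegaSubgroup p G i) = p ^ (e + 3)) :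
    HasTypeInvariants p G [e, 2, 1] := by
  rw [hreg.hasTypeInvariants_iff hG]
  have hω₁ : omegaInv p G 1 = 3 :=
    omegaInv_eq_of_card hG (s := 0) (by rw [omegaSubgroup_zero, Subgroup.card_bot, pow_zero]) h₁
  have hω₂ : omegaInv p G 2 = 2 := omegaInv_eq_of_card hG h₁ (h₂ 2 le_rfl (by omega))
  have hω (i : ℕ) (hi : 2 ≤ i) : omegaInv p G (i + 1) = if i < e then 1 else 0 := by
    split_ifs with hie
    · exact omegaInv_eq_of_card hG (h₂ i hi hie.le)
        (by rw [h₂ (i + 1) (by omega) hie, add_right_comm])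
    · exact omegaInv_eq_of_card hG (h₃ i (by omega)) (h₃ (i + 1) (by omega))
  rintro (_ | _ | i) (_ | _ | _ | j) <;> simp [hω₁, hω₂, hω] <;> grind

end TypeInvariants

section Arithmetic

/-- Reduction of residues modulo `p ^ 2` to residues modulo `p`. -/
def reduce (p : ℕ) : ZMod (p ^ 2) →+* ZMod p :=
  ZMod.castHom (dvd_pow_self p two_ne_zero) (ZMod p)

/-- The embedding of `ZMod p` in `ZMod (p ^ 2)` induced by multiplication by `p`. -/
def mulP (p : ℕ) : ZMod p →+ ZMod (p ^ 2) :=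
  ZMod.lift p ⟨(AddMonoidHom.mulLeft (p : ZMod (p ^ 2))).comp (Int.castAddHom _), by
    change (p : ZMod (p ^ 2)) * ((p : ℤ) : ZMod (p ^ 2)) = 0
    rw [Int.cast_natCast, ← Nat.cast_mul, ← pow_two, ZMod.natCast_self]⟩

variable {p : ℕ}

theorem mulP_intCast (n : ℤ) : mulP p n = p * n := by
  simp [mulP]

theorem reduce_surjective : Function.Surjective (reduce p) :=
  ZMod.castHom_surjective _

theorem mulP_reduce (v : ZMod (p ^ 2)) : mulP p (reduce p v) = p * v := by
  obtain ⟨n, rfl⟩ := ZMod.intCast_surjective v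
  rw [map_intCast, mulP_intCast]

@[simp]
theorem reduce_mulP (v : ZMod p) : reduce p (mulP p v) = 0 := by
  obtain ⟨n, rfl⟩ := ZMod.intCast_surjective v
  rw [mulP_intCast, map_mul, map_natCast, CharP.cast_eq_zero, zero_mul]

theorem mul_mulP (v : ZMod (p ^ 2)) (u : ZMod p) : v * mulP p u = mulP p (reduce p v * u) := by
  obtain ⟨u, rfl⟩ := reduce_surjective u
  rw [← map_mul, mulP_reduce, mulP_reduce, mul_left_comm]

theorem mulP_mul (v : ZMod (p ^ 2)) (u : ZMod p) : mulP p u * v = mulP p (u * reduce p v) := by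
  rw [mul_comm, mul_mulP, mul_comm]

theorem mulP_injective [hp : Fact p.Prime] : Function.Injective (mulP p) := by
  rw [injective_iff_map_eq_zero]
  intro u hu
  obtain ⟨n, rfl⟩ := ZMod.intCast_surjective u
  rw [mulP_intCast, ← Int.cast_natCast, ← Int.cast_mul, ZMod.intCast_zmod_eq_zero_iff_dvd] at hu
  rw [ZMod.intCast_zmod_eq_zero_iff_dvd]
  push_cast [pow_two] at hu
  exact Int.dvd_of_mul_dvd_mul_left (by exact_mod_cast hp.out.ne_zero) hu

@[simp]
theorem mulP_eq_zero [Fact p.Prime] {u : ZMod p} : mulP p u = 0 ↔ u = 0 :=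
  map_eq_zero_iff _ mulP_injective

theorem reduce_eq_zero_iff {v : ZMod (p ^ 2)} : reduce p v = 0 ↔ ∃ u, v = mulP p u := by
  constructor
  · intro h
    obtain ⟨n, rfl⟩ := ZMod.intCast_surjective v
    rw [map_intCast, ZMod.intCast_zmod_eq_zero_iff_dvd] at h
    obtain ⟨m, rfl⟩ := h
    exact ⟨m, by rw [mulP_intCast]; push_cast; rfl⟩
  · rintro ⟨u, rfl⟩
    exact reduce_mulP u

theorem isUnit_iff_reduce_ne_zero [Fact p.Prime] {v : ZMod (p ^ 2)} :
    IsUnit v ↔ reduce p v ≠ 0 := by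
  refine ⟨fun h => (h.map (reduce p)).ne_zero, fun h => ?_⟩
  obtain ⟨w, hw⟩ := reduce_surjective (reduce p v)⁻¹
  have hvw : reduce p (v * w - 1) = 0 := by
    rw [map_sub, map_mul, hw, mul_inv_cancel₀ h, map_one, sub_self]
  obtain ⟨u, hu⟩ := reduce_eq_zero_iff.1 hvw
  have hsq : mulP p u * mulP p u = 0 := by rw [mul_mulP, reduce_mulP, zero_mul, map_zero]
  exact IsUnit.of_mul_eq_one (w * (1 - mulP p u)) (by linear_combination (1 - mulP p u) * hu - hsq)

end Arithmetic

universe u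

section CyclicExtension

/-- `P` is an extension of `N` by a cyclic group of order `m`, generated by `N` and an element `gen`
which induces the automorphism `α` on `N` and whose `m`-th power is `z`. -/
structure CyclicExtension {N : Type*} [Group N] (α : MulAut N) (z : N) (m : ℕ) (P : Type*)
    [Group P] where
  incl : N →* P
  gen : P
  incl_injective : Function.Injective incl
  conj_incl : ∀ n, gen * incl n * gen⁻¹ = incl (α n)
  gen_pow : gen ^ m = incl z
  dvd_of_zpow_eq_incl : ∀ (t : ℤ) (n : N), gen ^ t = incl n → (m : ℤ) ∣ t
  exists_eq : ∀ x, ∃ (n : N) (t : ℤ), x = incl n * gen ^ t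

variable {N : Type u} {P Q : Type*} [Group N] [Group P] [Group Q] {α : MulAut N} {z : N} {m : ℕ}

theorem dvd_of_zpow_eq_of_orderOf_eq_mul {incl : N →* P} {gen : P} {q : ℕ} (hq : q ≠ 0)
    (hN : ∀ n : N, n ^ q = 1) (horder : orderOf gen = m * q) (t : ℤ) (n : N)
    (h : gen ^ t = incl n) : (m : ℤ) ∣ t := by
  have hone : gen ^ (t * q) = 1 := by
    rw [zpow_mul, h, zpow_natCast, ← map_pow, hN, map_one]
  rw [← orderOf_dvd_iff_zpow_eq_one, horder, Nat.cast_mul] at hone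
  exact Int.dvd_of_mul_dvd_mul_right (mod_cast hq) hone

theorem injective_incl_mul_pow {incl : N →* P} {gen : P} (hincl : Function.Injective incl)
    (hdvd : ∀ (t : ℤ) (n : N), gen ^ t = incl n → (m : ℤ) ∣ t) :
    Function.Injective fun x : N × Fin m => incl x.1 * gen ^ (x.2 : ℕ) := by
  rintro ⟨n, s⟩ ⟨n', t⟩ (h : incl n * gen ^ (s : ℕ) = incl n' * gen ^ (t : ℕ))
  have hst : gen ^ ((t : ℤ) - s) = incl (n'⁻¹ * n) := by
    rw [zpow_sub, zpow_natCast, zpow_natCast, map_mul, map_inv, mul_inv_eq_iff_eq_mul, mul_assoc, h,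
      inv_mul_cancel_left]
  obtain rfl : s = t := Fin.ext
    (((Nat.modEq_iff_dvd).2 (hdvd _ _ hst)).eq_of_lt_of_lt s.isLt t.isLt)
  rw [hincl (mul_right_cancel h)]

namespace CyclicExtension

theorem conj_zpow_incl (d : CyclicExtension α z m P) (t : ℤ) (n : N) :
    d.gen ^ t * d.incl n * (d.gen ^ t)⁻¹ = d.incl ((α ^ t) n) := by
  induction t generalizing n with
  | zero => simp
  | succ t ih =>
    rw [zpow_add_one, zpow_add_one, MulAut.mul_apply, ← ih, ← d.conj_incl]
    group
  | pred t ih =>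
    have h := d.conj_incl (α⁻¹ n)
    rw [MulAut.apply_inv_self] at h
    rw [zpow_sub_one, zpow_sub_one, MulAut.mul_apply, ← ih, ← h]
    group

theorem incl_mul_gen_pow_bijective (d : CyclicExtension α z m P) (hm : m ≠ 0) :
    Function.Bijective fun x : N × Fin m => d.incl x.1 * d.gen ^ (x.2 : ℕ) := by
  refine ⟨injective_incl_mul_pow d.incl_injective d.dvd_of_zpow_eq_incl, fun x => ?_⟩
  obtain ⟨n, t, rfl⟩ := d.exists_eq x
  have hm' : (m : ℤ) ≠ 0 := mod_cast hm
  lift t % m to ℕ using Int.emod_nonneg t hm' with s hs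
  have hlt : s < m := by
    have := Int.emod_lt_of_pos t (Int.natCast_pos.2 (Nat.pos_of_ne_zero hm))
    omega
  refine ⟨(n * z ^ (t / m), ⟨s, hlt⟩), ?_⟩
  rw [map_mul, map_zpow, ← d.gen_pow, mul_assoc, ← zpow_natCast, ← zpow_natCast, ← zpow_mul,
    ← zpow_add, hs, Int.mul_ediv_add_emod]

theorem card_eq (d : CyclicExtension α z m P) (hm : m ≠ 0) : Nat.card P = m * Nat.card N := by
  rw [← Nat.card_eq_of_bijective _ (d.incl_mul_gen_pow_bijective hm), Nat.card_prod, Nat.card_fin,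
    mul_comm]

theorem exists_eq_incl_mul_gen_pow (d : CyclicExtension α z m P) (hm : m ≠ 0) (x : P) :
    ∃ (n : N) (t : ℕ), x = d.incl n * d.gen ^ t := by
  obtain ⟨⟨n, t⟩, rfl⟩ := (d.incl_mul_gen_pow_bijective hm).2 x
  exact ⟨n, t, rfl⟩

/-- Counting shows that an extension of the right order is generated by `N` and `gen`. -/
def ofCard [Finite P] (incl : N →* P) (gen : P) (hincl : Function.Injective incl)
    (conj_incl : ∀ n, gen * incl n * gen⁻¹ = incl (α n)) (gen_pow : gen ^ m = incl z)
    (hdvd : ∀ (t : ℤ) (n : N), gen ^ t = incl n → (m : ℤ) ∣ t)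
    (hcard : Nat.card P = m * Nat.card N) : CyclicExtension α z m P where
  incl := incl
  gen := gen
  incl_injective := hincl
  conj_incl := conj_incl
  gen_pow := gen_pow
  dvd_of_zpow_eq_incl := hdvd
  exists_eq x := by
    obtain ⟨⟨n, t⟩, rfl⟩ := ((Nat.bijective_iff_injective_and_card _).2
      ⟨injective_incl_mul_pow hincl hdvd, by
        rw [hcard, Nat.card_prod, Nat.card_fin, mul_comm]⟩).2 x
    exact ⟨n, t, by rw [zpow_natCast]⟩

theorem orderOf_gen (d : CyclicExtension α z m P) (hm : m ≠ 0) :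
    orderOf d.gen = m * orderOf z := by
  have hdvd : m ∣ orderOf d.gen :=
    mod_cast d.dvd_of_zpow_eq_incl (orderOf d.gen) 1
      (by rw [zpow_natCast, pow_orderOf_eq_one, map_one])
  rw [← orderOf_injective d.incl d.incl_injective, ← d.gen_pow, orderOf_pow_of_dvd hm hdvd,
    Nat.mul_div_cancel' hdvd]

/-- The extension of `N` by the powers of `gen ^ k` inside an extension of `N` by `gen`. -/
def ofSubgroup {k l : ℕ} (d : CyclicExtension α z m P) (hkl : m = k * l) (hm : m ≠ 0)
    (K : Subgroup P) (hK : ∀ (n : N) (t : ℕ), d.incl n * d.gen ^ t ∈ K ↔ k ∣ t) :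
    CyclicExtension (α ^ k) z l K where
  incl := d.incl.codRestrict K fun n => by simpa using (hK n 0).2 (dvd_zero _)
  gen := ⟨d.gen ^ k, by simpa using (hK 1 k).2 dvd_rfl⟩
  incl_injective n n' h := d.incl_injective (congrArg Subtype.val h)
  conj_incl n := Subtype.ext (by simpa using d.conj_zpow_incl k n)
  gen_pow := Subtype.ext (by simpa [← pow_mul, ← hkl] using d.gen_pow)
  dvd_of_zpow_eq_incl t n h := by
    have h' : d.gen ^ ((k : ℤ) * t) = d.incl n := by
      simpa [zpow_mul] using congrArg Subtype.val h
    have hdvd := d.dvd_of_zpow_eq_incl _ n h'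
    rw [hkl, Nat.cast_mul] at hdvd
    exact Int.dvd_of_mul_dvd_mul_left (mod_cast left_ne_zero_of_mul (hkl ▸ hm)) hdvd
  exists_eq := by
    rintro ⟨x, hx⟩
    obtain ⟨n, t, rfl⟩ := d.exists_eq_incl_mul_gen_pow hm x
    obtain ⟨t, rfl⟩ := (hK n t).1 hx
    exact ⟨n, t, Subtype.ext (by simp [pow_mul])⟩

/-- The canonical map onto an extension from the semidirect product of `N` and an infinite cyclic
group acting through `α`. -/
def hom (d : CyclicExtension α z m P) : N ⋊[zpowersHom _ α] Multiplicative ℤ →* P :=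
  SemidirectProduct.lift d.incl (zpowersHom _ d.gen) fun g => by
    ext n
    simpa [zpowersHom_apply, ← map_zpow] using (d.conj_zpow_incl g.toAdd n).symm

theorem hom_apply (d : CyclicExtension α z m P) (x : N ⋊[zpowersHom _ α] Multiplicative ℤ) :
    d.hom x = d.incl x.left * d.gen ^ x.right.toAdd := by
  simp [hom, SemidirectProduct.lift]

theorem hom_surjective (d : CyclicExtension α z m P) : Function.Surjective d.hom := by
  intro x
  obtain ⟨n, t, rfl⟩ := d.exists_eq x
  exact ⟨⟨n, Multiplicative.ofAdd t⟩, d.hom_apply _⟩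

theorem hom_eq_one_iff (d : CyclicExtension α z m P)
    (x : N ⋊[zpowersHom _ α] Multiplicative ℤ) :
    d.hom x = 1 ↔ ∃ s : ℤ, x.right.toAdd = m * s ∧ x.left = z ^ (-s) := by
  have hgen (s : ℤ) : d.gen ^ ((m : ℤ) * s) = d.incl (z ^ s) := by
    rw [zpow_mul, zpow_natCast, d.gen_pow, map_zpow]
  rw [d.hom_apply]
  constructor
  · intro h
    have hright : d.gen ^ x.right.toAdd = d.incl x.left⁻¹ := by
      rw [map_inv]
      exact (inv_eq_of_mul_eq_one_right h).symm
    obtain ⟨s, hs⟩ := d.dvd_of_zpow_eq_incl _ _ hright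
    rw [hs, hgen] at hright
    exact ⟨s, hs, by rw [zpow_neg, d.incl_injective hright, inv_inv]⟩
  · rintro ⟨s, hright, hleft⟩
    rw [hright, hleft, hgen, ← map_mul, zpow_neg, inv_mul_cancel, map_one]

theorem exists_mulEquiv (d : CyclicExtension α z m P) (d' : CyclicExtension α z m Q) :
    ∃ f : P ≃* Q, (∀ n, f (d.incl n) = d'.incl n) ∧ f d.gen = d'.gen := by
  have hker (x) : d.hom x = 1 ↔ d'.hom x = 1 := by rw [hom_eq_one_iff, hom_eq_one_iff]
  let f : P →* Q := d.hom.liftOfSurjective d.hom_surjective ⟨d'.hom, fun x => (hker x).1⟩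
  have f_hom (x) : f (d.hom x) = d'.hom x :=
    d.hom.liftOfRightInverse_comp_apply _ _ ⟨d'.hom, fun x => (hker x).1⟩ x
  have hf : Function.Bijective f := by
    refine ⟨(injective_iff_map_eq_one f).2 fun x hx => ?_, fun y => ?_⟩
    · obtain ⟨x, rfl⟩ := d.hom_surjective x
      rwa [f_hom, ← hker] at hx
    · obtain ⟨x, rfl⟩ := d'.hom_surjective y
      exact ⟨d.hom x, f_hom x⟩
  refine ⟨MulEquiv.ofBijective f hf, fun n => ?_, ?_⟩
  · simpa [hom_apply] using f_hom (SemidirectProduct.inl n)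
  · simpa [hom_apply] using f_hom (SemidirectProduct.inr (Multiplicative.ofAdd 1))

/-- Transport of an extension along an isomorphism. -/
def congr (d : CyclicExtension α z m P) (f : P ≃* Q) : CyclicExtension α z m Q where
  incl := f.toMonoidHom.comp d.incl
  gen := f d.gen
  incl_injective := f.injective.comp d.incl_injective
  conj_incl n := by simp [← d.conj_incl]
  gen_pow := by simp [← d.gen_pow]
  dvd_of_zpow_eq_incl t n h := d.dvd_of_zpow_eq_incl t n (f.injective (by simpa using h))
  exists_eq x := by
    obtain ⟨n, t, h⟩ := d.exists_eq (f.symm x)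
    exact ⟨n, t, by rw [← f.apply_symm_apply x, h]; simp⟩

end CyclicExtension

variable (α z m)

/-- The subgroup of `N ⋊ ℤ` which identifies the `m`-th power of the generator of `ℤ` with `z`. -/
def cyclicRelator : Subgroup (N ⋊[zpowersHom _ α] Multiplicative ℤ) :=
  Subgroup.zpowers ⟨z⁻¹, Multiplicative.ofAdd (m : ℤ)⟩

variable {α z m}

theorem cyclicRelator_le_center (hz : α z = z) (hα : α ^ m = MulAut.conj z) :
    cyclicRelator α z m ≤ Subgroup.center _ := by
  have hzpow (t : ℤ) : (α ^ t) z = z :=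
    (MulAction.stabilizer (MulAut N) z).zpow_mem (x := α) hz t
  rw [cyclicRelator, Subgroup.zpowers_le, Subgroup.mem_center_iff]
  rintro ⟨n, t⟩
  refine SemidirectProduct.ext ?_ (mul_comm _ _)
  simp [zpowersHom_apply, hzpow, hα, mul_assoc]

theorem mem_cyclicRelator_iff (hz : α z = z) (x : N ⋊[zpowersHom _ α] Multiplicative ℤ) :
    x ∈ cyclicRelator α z m ↔ ∃ s : ℤ, x.right.toAdd = m * s ∧ x.left = z ^ (-s) := by
  have hcomm : Commute (SemidirectProduct.inl z⁻¹ : N ⋊[zpowersHom _ α] Multiplicative ℤ)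
      (SemidirectProduct.inr (Multiplicative.ofAdd (m : ℤ))) := by
    have hzpow : (α ^ m) z = z := (MulAction.stabilizer (MulAut N) z).pow_mem (x := α) hz m
    refine SemidirectProduct.ext ?_ (mul_comm _ _)
    simp [hzpow]
  have hpow (s : ℤ) : (⟨z⁻¹, Multiplicative.ofAdd (m : ℤ)⟩ :
      N ⋊[zpowersHom _ α] Multiplicative ℤ) ^ s = ⟨z ^ (-s), Multiplicative.ofAdd (m * s : ℤ)⟩ := by
    rw [SemidirectProduct.mk_eq_inl_mul_inr, hcomm.mul_zpow, ← map_zpow, ← map_zpow,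
      SemidirectProduct.mk_eq_inl_mul_inr, zpow_neg, inv_zpow, ← ofAdd_zsmul, smul_eq_mul,
      mul_comm s]
  rw [cyclicRelator, Subgroup.mem_zpowers_iff]
  refine exists_congr fun s => ?_
  rw [hpow, SemidirectProduct.ext_iff, and_comm, eq_comm, eq_comm (b := x.left)]
  rfl

theorem exists_cyclicExtension (hm : m ≠ 0) (hz : α z = z) (hα : α ^ m = MulAut.conj z) :
    ∃ (P : Type u) (_ : Group P), Nonempty (CyclicExtension α z m P) := by
  have hnormal : (cyclicRelator α z m).Normal := ⟨fun x hx y => by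
    rwa [Subgroup.mem_center_iff.1 (cyclicRelator_le_center hz hα hx) y, mul_inv_cancel_right]⟩
  let π := QuotientGroup.mk' (cyclicRelator α z m)
  let a : N ⋊[zpowersHom _ α] Multiplicative ℤ := SemidirectProduct.inr (Multiplicative.ofAdd 1)
  have ha (t : ℤ) : a ^ t = SemidirectProduct.inr (Multiplicative.ofAdd t) := by
    rw [← map_zpow, ← ofAdd_zsmul, smul_eq_mul, mul_one]
  refine ⟨_, inferInstance, ⟨
    { incl := π.comp SemidirectProduct.inl
      gen := π a
      incl_injective := ?_
      conj_incl := fun n => ?_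
      gen_pow := ?_
      dvd_of_zpow_eq_incl := fun t n h => ?_
      exists_eq := fun x => ?_ }⟩⟩
  · rw [injective_iff_map_eq_one]
    intro n hn
    rw [MonoidHom.comp_apply, QuotientGroup.mk'_apply, QuotientGroup.eq_one_iff,
      mem_cyclicRelator_iff hz] at hn
    obtain ⟨s, hs, hn⟩ := hn
    obtain rfl : s = 0 := (mul_eq_zero.1 hs.symm).resolve_left (mod_cast hm)
    simpa using hn
  · rw [MonoidHom.comp_apply, MonoidHom.comp_apply, ← map_inv, ← map_mul, ← map_mul]
    congr 1
    simpa [a] using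
      (SemidirectProduct.inl_aut (φ := zpowersHom _ α) (Multiplicative.ofAdd 1) n).symm
  · rw [← map_pow, MonoidHom.comp_apply, eq_comm, QuotientGroup.mk'_apply,
      QuotientGroup.mk'_apply, QuotientGroup.eq, ← zpow_natCast, ha, mem_cyclicRelator_iff hz]
    exact ⟨1, by simp⟩
  · rw [← map_zpow, MonoidHom.comp_apply, ha, eq_comm, QuotientGroup.mk'_apply,
      QuotientGroup.mk'_apply, QuotientGroup.eq, mem_cyclicRelator_iff hz] at h
    obtain ⟨s, hs, -⟩ := h
    exact ⟨s, by simpa using hs⟩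
  · obtain ⟨⟨n, t⟩, rfl⟩ := QuotientGroup.mk'_surjective _ x
    refine ⟨n, t.toAdd, ?_⟩
    rw [← map_zpow, ha, MonoidHom.comp_apply, ← map_mul, ← SemidirectProduct.mk_eq_inl_mul_inr]
    rfl

end CyclicExtension

/-- The data of a linear action on triples `(u, v, c)`: the generator `(0, 1, 0)` is sent to
`(x, 1 + p y, w)` and the generator `(0, 0, 1)` is sent to `(p f, p g, 1)`, while `(1, 0, 0)` is
fixed. -/
structure ActionParams (p : ℕ) where
  x : ZMod (p ^ 2)
  f : ZMod p
  y : ZMod p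
  g : ZMod p
  w : ZMod p

/-- The underlying set of the group `Ω₂` of a regular `p`-group of type `(e, 2, 1)`. The parameters
`i` and `j` only enter its multiplication: the group is generated by `z = (1, 0, 0)`, which is
central, `b = (0, 1, 0)` and `c = (0, 0, 1)`, where `⁅b, c⁆ = z ^ (2 p i) * b ^ (2 p j)`. -/
@[ext]
structure Core {p : ℕ} (i j : ZMod p) where
  u : ZMod (p ^ 2)
  v : ZMod (p ^ 2)
  c : ZMod p

section Core

variable {p : ℕ} {i j : ZMod p}

namespace Core

theorem card : Nat.card (Core i j) = p ^ 5 := by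
  have equiv : Core i j ≃ ZMod (p ^ 2) × ZMod (p ^ 2) × ZMod p :=
    { toFun n := (n.u, n.v, n.c)
      invFun n := ⟨n.1, n.2.1, n.2.2⟩ }
  rw [Nat.card_congr equiv, Nat.card_prod, Nat.card_prod, Nat.card_zmod, Nat.card_zmod]
  ring

instance [NeZero p] : Finite (Core i j) :=
  Nat.finite_of_card_ne_zero (by rw [card]; exact pow_ne_zero _ (NeZero.ne p))

/-- The alternating form by which the multiplication of `Core i j` differs from addition. Since it
enters with both signs, `2` has to be invertible for all commutators to arise in this way. -/
def form (n n' : Core i j) : ZMod p := reduce p n.v * n'.c - n.c * reduce p n'.v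

instance : Mul (Core i j) :=
  ⟨fun n n' => ⟨n.u + n'.u + mulP p (i * form n n'), n.v + n'.v + mulP p (j * form n n'),
    n.c + n'.c⟩⟩

instance : One (Core i j) := ⟨⟨0, 0, 0⟩⟩

instance : Inv (Core i j) := ⟨fun n => ⟨-n.u, -n.v, -n.c⟩⟩

theorem one_def : (1 : Core i j) = ⟨0, 0, 0⟩ := rfl

theorem mul_def (n n' : Core i j) : n * n' =
    ⟨n.u + n'.u + mulP p (i * form n n'), n.v + n'.v + mulP p (j * form n n'), n.c + n'.c⟩ := rfl

theorem inv_def (n : Core i j) : n⁻¹ = ⟨-n.u, -n.v, -n.c⟩ := rfl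

instance : Group (Core i j) where
  mul_assoc n n' n'' := by
    simp only [mul_def, form, map_add, reduce_mulP]
    ext
    · simp only [add_zero, mul_add, add_mul, mul_sub, map_add, map_sub]; ring
    · simp only [add_zero, mul_add, add_mul, mul_sub, map_add, map_sub]; ring
    · simp only [add_assoc]
  one_mul n := by ext <;> simp [mul_def, one_def, form]
  mul_one n := by ext <;> simp [mul_def, one_def, form]
  inv_mul_cancel n := by
    have hform : form n⁻¹ n = 0 := by
      simp only [form, inv_def, map_neg]
      ring
    rw [mul_def, hform]
    ext <;> simp [one_def, inv_def]

theorem mk_mul_mk (u v : ZMod (p ^ 2)) (c : ZMod p) (u' v' : ZMod (p ^ 2)) (c' : ZMod p) :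
    (⟨u, v, c⟩ : Core i j) * ⟨u', v', c'⟩ =
      ⟨u + u' + mulP p (i * (reduce p v * c' - c * reduce p v')),
        v + v' + mulP p (j * (reduce p v * c' - c * reduce p v')), c + c'⟩ := rfl

theorem inv_mk (u v : ZMod (p ^ 2)) (c : ZMod p) : (⟨u, v, c⟩ : Core i j)⁻¹ = ⟨-u, -v, -c⟩ := rfl

theorem mk_pow (u v : ZMod (p ^ 2)) (c : ZMod p) (k : ℕ) :
    (⟨u, v, c⟩ : Core i j) ^ k = ⟨k * u, k * v, k * c⟩ := by
  induction k with
  | zero => simp [one_def]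
  | succ k ih =>
    have hform : reduce p (k * v) * c - k * c * reduce p v = 0 := by
      rw [map_mul, map_natCast]
      ring
    rw [pow_succ, ih, mk_mul_mk, hform]
    ext <;> simp [add_one_mul]

theorem pow_sq_eq_one (n : Core i j) : n ^ p ^ 2 = 1 := by
  have h : ((p ^ 2 : ℕ) : ZMod p) = 0 := by simp
  rw [mk_pow, h, ZMod.natCast_self]
  simp [one_def]

theorem mk_z_mul_comm (u : ZMod (p ^ 2)) (n : Core i j) : ⟨u, 0, 0⟩ * n = n * ⟨u, 0, 0⟩ := by
  ext <;> simp [mul_def, form, add_comm]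

end Core

namespace ActionParams

/-- The action on `Core i j` with the given parameters. -/
def act (t : ActionParams p) (n : Core i j) : Core i j :=
  ⟨n.u + t.x * n.v + mulP p (t.f * n.c), n.v + mulP p (t.y * reduce p n.v + t.g * n.c),
    n.c + t.w * reduce p n.v⟩

/-- The parameters of the `k`-th power of an action. -/
def pow (t : ActionParams p) (k : ℕ) : ActionParams p where
  x := k * t.x + mulP p (k.choose 2 * (t.y * reduce p t.x + t.w * t.f)
    + k.choose 3 * (t.w * t.g * reduce p t.x))
  f := k * t.f + k.choose 2 * (t.g * reduce p t.x)
  y := k * t.y + k.choose 2 * (t.w * t.g)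
  g := k * t.g
  w := k * t.w

theorem act_act_pow (t : ActionParams p) (k : ℕ) (n : Core i j) :
    t.act ((t.pow k).act n) = (t.pow (k + 1)).act n := by
  have choose_two : (((k + 1).choose 2 : ℕ) : ZMod p) = k + k.choose 2 := by
    rw [Nat.choose_succ_succ' k 1, Nat.choose_one_right, Nat.cast_add]
  have choose_three : (((k + 1).choose 3 : ℕ) : ZMod p) = k.choose 2 + k.choose 3 := by
    rw [Nat.choose_succ_succ' k 2, Nat.cast_add]
  simp only [act, pow, choose_two, choose_three, Nat.cast_add, Nat.cast_one]
  ext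
  · simp only [map_add, mul_add, add_mul, mul_mulP, mulP_mul, one_mul]
    ring_nf
  · simp only [map_add, reduce_mulP, mul_add, add_mul, one_mul, mul_zero, map_zero]
    ring_nf
  · simp only [map_add, reduce_mulP]
    ring

theorem act_iterate (t : ActionParams p) (k : ℕ) (n : Core i j) :
    t.act^[k] n = (t.pow k).act n := by
  induction k with
  | zero => ext <;> simp [act, pow]
  | succ k ih => rw [Function.iterate_succ_apply', ih, act_act_pow]

theorem pow_mul_act (t : ActionParams p) (k m : ℕ) (n : Core i j) :
    (t.pow (k * m)).act n = ((t.pow k).pow m).act n := by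
  have hact : t.act^[k] = (t.pow k).act (i := i) (j := j) := funext (t.act_iterate k)
  rw [← act_iterate, ← act_iterate, Function.iterate_mul, hact]

@[simp]
theorem reduce_pow_x (t : ActionParams p) (k : ℕ) : reduce p (t.pow k).x = k * reduce p t.x := by
  simp [pow]

theorem act_injective (t : ActionParams p) : Function.Injective (t.act (i := i) (j := j)) := by
  intro n n' h
  obtain ⟨hu, hv, hc⟩ := Core.ext_iff.1 h
  simp only [act] at hu hv hc
  have hreduce : reduce p n.v = reduce p n'.v := by simpa using congrArg (reduce p) hv
  rw [hreduce, add_left_inj] at hc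
  rw [hreduce, hc, add_left_inj] at hv
  rw [hv, hc, add_left_inj, add_left_inj] at hu
  exact Core.ext hu hv hc

/-- The action as an endomorphism; `(p f, p g, 1)` and `(x, 1 + p y, w)` satisfy the relations of
`Core i j` because `x j` is divisible by `p`. -/
def hom (t : ActionParams p) (h : reduce p t.x * j = 0) : Core i j →* Core i j where
  toFun := t.act
  map_one' := by ext <;> simp [act, Core.one_def]
  map_mul' n n' := by
    have hform : (t.act n).form (t.act n') = n.form n' := by
      simp only [Core.form, act, map_add, reduce_mulP]
      ring
    have hreduce : reduce p (n * n').v = reduce p n.v + reduce p n'.v := by simp [Core.mul_def]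
    rw [Core.mul_def (t.act n), hform]
    ext
    · simp only [act, hreduce]
      simp only [Core.mul_def, mul_add, map_add, mul_mulP, ← mul_assoc, h, zero_mul, map_zero]
      ring
    · simp only [act, hreduce]
      simp only [Core.mul_def, mul_add, map_add]
      ring
    · simp only [act, hreduce]
      simp only [Core.mul_def]
      ring

theorem hom_apply (t : ActionParams p) (h : reduce p t.x * j = 0) (n : Core i j) :
    t.hom h n = t.act n := rfl

end ActionParams

/-- The parameters of a regular `p`-group of type `(e, 2, 1)`: the multiplication of its subgroup
`Core i j`, and the action on it of an element whose `p ^ (e - 2)`-th power is `(1, 0, 0)`. -/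
structure Params (p : ℕ) extends ActionParams p where
  i : ZMod p
  j : ZMod p
  reduce_x_mul_j : reduce p x * j = 0

namespace Params

variable (θ : Params p)

/-- The automorphism of `Core θ.i θ.j` given by the action parameters. -/
noncomputable def aut [NeZero p] : MulAut (Core θ.i θ.j) :=
  MulEquiv.ofBijective (θ.hom θ.reduce_x_mul_j) (Finite.injective_iff_bijective.1 θ.act_injective)

theorem aut_apply [NeZero p] (n : Core θ.i θ.j) : θ.aut n = θ.act n := rfl

theorem aut_pow_apply [NeZero p] (k : ℕ) (n : Core θ.i θ.j) : (θ.aut ^ k) n = (θ.pow k).act n := by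
  rw [← ActionParams.act_iterate]
  induction k with
  | zero => rfl
  | succ k ih => rw [pow_succ', Function.iterate_succ_apply', ← ih, MulAut.mul_apply, aut_apply]

theorem aut_pow_sq [Fact p.Prime] (hp5 : 5 ≤ p) : θ.aut ^ p ^ 2 = 1 := by
  have hp : p.Prime := Fact.out
  have hsq : ((p ^ 2 : ℕ) : ZMod p) = 0 := by simp
  have choose_eq_zero {r : ℕ} (hr : r ≠ 0) (hrp : r < p) : (((p ^ 2).choose r : ℕ) : ZMod p) = 0 :=
    (CharP.cast_eq_zero_iff (ZMod p) p _).2 (hp.dvd_choose_pow hr (by nlinarith))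
  ext1 n
  rw [aut_pow_apply]
  simp only [ActionParams.act, ActionParams.pow, hsq, ZMod.natCast_self,
    choose_eq_zero two_ne_zero (by omega), choose_eq_zero three_ne_zero (by omega)]
  simp

end Params

end Core

section Extension

open scoped commutatorElement

variable {p : ℕ} {i j : ZMod p}

namespace Core

@[simp]
theorem reduce_u_mul (n n' : Core i j) : reduce p (n * n').u = reduce p n.u + reduce p n'.u := by
  simp [mul_def]

@[simp]
theorem reduce_v_mul (n n' : Core i j) : reduce p (n * n').v = reduce p n.v + reduce p n'.v := by
  simp [mul_def]

@[simp]
theorem reduce_u_inv (n : Core i j) : reduce p n⁻¹.u = -reduce p n.u :=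
  map_neg _ _

@[simp]
theorem reduce_v_inv (n : Core i j) : reduce p n⁻¹.v = -reduce p n.v :=
  map_neg _ _

@[simp]
theorem reduce_u_pow (n : Core i j) (k : ℕ) : reduce p (n ^ k).u = k * reduce p n.u := by
  rw [mk_pow, map_mul, map_natCast]

@[simp]
theorem reduce_v_pow (n : Core i j) (k : ℕ) : reduce p (n ^ k).v = k * reduce p n.v := by
  rw [mk_pow, map_mul, map_natCast]

theorem mk_mulP_mul_mk_mulP (a b a' b' : ZMod p) :
    (⟨mulP p a, mulP p b, 0⟩ : Core i j) * ⟨mulP p a', mulP p b', 0⟩ =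
      ⟨mulP p (a + a'), mulP p (b + b'), 0⟩ := by
  ext <;> simp [mk_mul_mk]

theorem pow_prime (n : Core i j) : n ^ p = ⟨mulP p (reduce p n.u), mulP p (reduce p n.v), 0⟩ := by
  rw [mk_pow]
  ext <;> simp [mulP_reduce]

theorem orderOf_z : orderOf (⟨1, 0, 0⟩ : Core i j) = p ^ 2 := by
  have hpow (k : ℕ) : (⟨1, 0, 0⟩ : Core i j) ^ k = 1 ↔ p ^ 2 ∣ k := by
    rw [mk_pow, one_def, mk.injEq, ← ZMod.natCast_eq_zero_iff]
    simp
  exact Nat.dvd_antisymm (orderOf_dvd_of_pow_eq_one ((hpow _).2 dvd_rfl))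
    ((hpow _).1 (pow_orderOf_eq_one _))

end Core

namespace ActionParams

@[simp]
theorem reduce_u_act (t : ActionParams p) (n : Core i j) :
    reduce p (t.act n).u = reduce p n.u + reduce p t.x * reduce p n.v := by
  simp [act]

@[simp]
theorem reduce_v_act (t : ActionParams p) (n : Core i j) :
    reduce p (t.act n).v = reduce p n.v := by
  simp [act]

/-- The product of `n`, `t.act n`, …, `t.act^[m - 1] n` in closed form. -/
def orbitProd (t : ActionParams p) (n : Core i j) (m : ℕ) : Core i j where
  u := m * n.u + m.choose 2 * (t.x * n.v) + mulP p (m.choose 2 * (t.f * n.c)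
    + m.choose 3 * (reduce p t.x * (t.y * reduce p n.v + t.g * n.c) + t.f * t.w * reduce p n.v)
    + m.choose 4 * (reduce p t.x * t.g * t.w * reduce p n.v)
    + (m + 1).choose 3 * (i * t.w * reduce p n.v ^ 2))
  v := m * n.v + mulP p (m.choose 2 * (t.y * reduce p n.v + t.g * n.c)
    + m.choose 3 * (t.g * t.w * reduce p n.v) + (m + 1).choose 3 * (j * t.w * reduce p n.v ^ 2))
  c := m * n.c + m.choose 2 * (t.w * reduce p n.v)

theorem orbitProd_zero (t : ActionParams p) (n : Core i j) : t.orbitProd n 0 = 1 := by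
  have h : Nat.choose (0 + 1) 3 = 0 := rfl
  rw [orbitProd, h]
  ext <;> simp [Core.one_def]

theorem orbitProd_mul_act_pow (t : ActionParams p) (n : Core i j) (m : ℕ) :
    t.orbitProd n m * (t.pow m).act n = t.orbitProd n (m + 1) := by
  have choose_two (k : ℕ) : (k + 1).choose 2 = k + k.choose 2 := by
    rw [Nat.choose_succ_succ' k 1, Nat.choose_one_right]
  have choose_three (k : ℕ) : (k + 1).choose 3 = k.choose 2 + k.choose 3 :=
    Nat.choose_succ_succ' k 2
  have choose_four : (m + 1).choose 4 = m.choose 3 + m.choose 4 := Nat.choose_succ_succ' m 3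
  have hsq : (m : ZMod p) * m = m.choose 2 + (m + 1).choose 2 := by
    have hdvd : 2 ∣ m * (m - 1) := (Nat.even_mul_pred_self m).two_dvd
    rw [choose_two, Nat.choose_two_right, ← Nat.cast_mul, ← Nat.cast_add]
    congr 1
    cases m with
    | zero => rfl
    | succ m => grind
  have hform : (t.orbitProd n m).form ((t.pow m).act n) =
      (m + 1).choose 2 * (t.w * reduce p n.v ^ 2) := by
    simp only [Core.form, orbitProd, act, pow, map_add, reduce_mulP, map_mul, map_natCast]
    linear_combination (t.w * reduce p n.v ^ 2) * hsq
  rw [Core.mul_def, hform]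
  simp only [act, pow, orbitProd, choose_three (m + 1), choose_three m, choose_four, choose_two,
    Nat.cast_add]
  ext
  · simp only [mul_add, add_mul, mulP_mul, map_add]
    ring_nf
  · simp only [mul_add, add_mul, map_add]
    ring_nf
  · ring

theorem orbitProd_prime [Fact p.Prime] (hp5 : 5 ≤ p) (t : ActionParams p) (n : Core i j) :
    t.orbitProd n p =
      ⟨mulP p (reduce p n.u + ((p - 1) / 2 : ℕ) * (reduce p t.x * reduce p n.v)),
        mulP p (reduce p n.v), 0⟩ := by
  have hp : p.Prime := Fact.out
  have choose_eq_zero {r : ℕ} (hr : r ≠ 0) (hrp : r < p) : ((p.choose r : ℕ) : ZMod p) = 0 :=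
    (CharP.cast_eq_zero_iff (ZMod p) p _).2 (hp.dvd_choose_self hr hrp)
  have choose_two := choose_eq_zero two_ne_zero (by omega)
  have choose_three := choose_eq_zero three_ne_zero (by omega)
  have choose_three' : (((p + 1).choose 3 : ℕ) : ZMod p) = 0 := by
    rw [Nat.choose_succ_succ' p 2, Nat.cast_add, choose_two, choose_three, add_zero]
  have choose_two_sq : ((p.choose 2 : ℕ) : ZMod (p ^ 2)) = p * ((p - 1) / 2 : ℕ) := by
    rw [Nat.choose_two_right, Nat.mul_div_assoc _ (hp.even_sub_one (by omega)).two_dvd,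
      Nat.cast_mul]
  simp only [orbitProd, choose_two, choose_three, choose_three', choose_two_sq,
    choose_eq_zero four_ne_zero (by omega), mulP_reduce, ← map_natCast (reduce p), ← map_mul,
    ← map_add (reduce p)]
  ext <;> simp
  ring

end ActionParams

/-- `P` is generated by `Ω₂ = Core θ.i θ.j` and an element which acts on `Ω₂` as prescribed by `θ`
and whose `p ^ (e - 2)`-th power is `(1, 0, 0)`. -/
abbrev Params.Extension [NeZero p] (θ : Params p) (e : ℕ) (P : Type) [Group P] :=
  CyclicExtension θ.aut (⟨1, 0, 0⟩ : Core θ.i θ.j) (p ^ (e - 2)) P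

theorem Params.exists_extension [Fact p.Prime] (hp5 : 5 ≤ p) (θ : Params p) {e : ℕ} (he : 4 ≤ e) :
    ∃ (P : Type) (_ : Group P), Nonempty (θ.Extension e P) := by
  have hconj : MulAut.conj (⟨1, 0, 0⟩ : Core θ.i θ.j) = 1 := by
    ext1 n
    rw [MulAut.conj_apply, Core.mk_z_mul_comm, mul_inv_cancel_right, MulAut.one_apply]
  refine exists_cyclicExtension (pow_ne_zero _ (NeZero.ne p)) ?_ ?_
  · rw [θ.aut_apply]
    ext <;> simp [ActionParams.act]
  · obtain ⟨k, hk⟩ : ∃ k, e - 2 = 2 + k := ⟨e - 4, by omega⟩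
    rw [hconj, hk, pow_add, pow_mul, θ.aut_pow_sq hp5, one_pow]

namespace Params.Extension

variable {θ : Params p} {e : ℕ} {P : Type} [Group P]

section

variable [NeZero p]

theorem card_eq (d : θ.Extension e P) (he : 2 ≤ e) : Nat.card P = p ^ (e + 3) := by
  rw [CyclicExtension.card_eq d (pow_ne_zero _ (NeZero.ne p)), Core.card, ← pow_add]
  congr 1
  omega

theorem finite (d : θ.Extension e P) (he : 2 ≤ e) : Finite P :=
  Nat.finite_of_card_ne_zero (by rw [card_eq d he]; exact pow_ne_zero _ (NeZero.ne p))

theorem isPGroup (d : θ.Extension e P) (he : 2 ≤ e) : IsPGroup p P :=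
  IsPGroup.of_card (card_eq d he)

theorem orderOf_gen (d : θ.Extension e P) (he : 2 ≤ e) : orderOf d.gen = p ^ e := by
  rw [CyclicExtension.orderOf_gen d (pow_ne_zero _ (NeZero.ne p)), Core.orderOf_z, ← pow_add,
    Nat.sub_add_cancel he]

theorem exists_eq (d : θ.Extension e P) (x : P) :
    ∃ (n : Core θ.i θ.j) (t : ℕ), x = d.incl n * d.gen ^ t :=
  d.exists_eq_incl_mul_gen_pow (pow_ne_zero _ (NeZero.ne p)) x

theorem gen_pow_mul_incl (d : θ.Extension e P) (t : ℕ) (n : Core θ.i θ.j) :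
    d.gen ^ t * d.incl n = d.incl ((θ.pow t).act n) * d.gen ^ t := by
  have h := d.conj_zpow_incl t n
  rwa [zpow_natCast, zpow_natCast, aut_pow_apply, mul_inv_eq_iff_eq_mul] at h

theorem mul_eq (d : θ.Extension e P) (n n' : Core θ.i θ.j) (t s : ℕ) :
    d.incl n * d.gen ^ t * (d.incl n' * d.gen ^ s) =
      d.incl (n * (θ.pow t).act n') * d.gen ^ (t + s) := by
  rw [mul_assoc, ← mul_assoc _ (d.incl n'), gen_pow_mul_incl, map_mul, pow_add]
  simp only [mul_assoc]

theorem pow_eq (d : θ.Extension e P) (n : Core θ.i θ.j) (t m : ℕ) :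
    (d.incl n * d.gen ^ t) ^ m = d.incl ((θ.pow t).orbitProd n m) * d.gen ^ (t * m) := by
  induction m with
  | zero => simp [ActionParams.orbitProd_zero]
  | succ m ih =>
    rw [pow_succ, ih, mul_eq, ActionParams.pow_mul_act, ActionParams.orbitProd_mul_act_pow,
      mul_add_one]

end

variable [Fact p.Prime]

theorem pow_prime (d : θ.Extension e P) (hp5 : 5 ≤ p) (n : Core θ.i θ.j) (t : ℕ) :
    (d.incl n * d.gen ^ t) ^ p =
      d.incl ⟨mulP p (reduce p n.u
          + ((p - 1) / 2 : ℕ) * (t * reduce p θ.x * reduce p n.v)), mulP p (reduce p n.v), 0⟩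
        * d.gen ^ (t * p) := by
  rw [pow_eq, ActionParams.orbitProd_prime hp5, ActionParams.reduce_pow_x]

theorem pow_prime_pow (d : θ.Extension e P) (hp5 : 5 ≤ p) (n : Core θ.i θ.j) (t : ℕ) {i : ℕ}
    (hi : 2 ≤ i) : (d.incl n * d.gen ^ t) ^ p ^ i = d.gen ^ (t * p ^ i) := by
  obtain ⟨i, rfl⟩ := Nat.exists_eq_add_of_le hi
  have hsq : (d.incl n * d.gen ^ t) ^ (p * p) = d.gen ^ (t * (p * p)) := by
    rw [pow_mul, pow_prime d hp5, pow_prime d hp5]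
    simp [← Core.one_def, mul_assoc]
  rw [← pow_two] at hsq
  rw [pow_add, pow_mul, hsq, ← pow_mul, mul_assoc]

theorem mul_of_mulP (d : θ.Extension e P) (a b a' b' : ZMod p) (t s : ℕ) :
    d.incl ⟨mulP p a, mulP p b, 0⟩ * d.gen ^ (t * p) *
        (d.incl ⟨mulP p a', mulP p b', 0⟩ * d.gen ^ (s * p)) =
      d.incl ⟨mulP p (a + a'), mulP p (b + b'), 0⟩ * d.gen ^ ((t + s) * p) := by
  have hfix : (θ.pow (t * p)).act (⟨mulP p a', mulP p b', 0⟩ : Core θ.i θ.j) =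
      ⟨mulP p a', mulP p b', 0⟩ := by
    ext <;> simp [ActionParams.act, mul_mulP]
  rw [mul_eq, hfix, Core.mk_mulP_mul_mk_mulP, add_mul]

theorem commutator_pow_prime (d : θ.Extension e P) (n n' : Core θ.i θ.j) (t s k : ℕ) :
    (⁅d.incl n * d.gen ^ t, d.incl n' * d.gen ^ s⁆ ^ k) ^ p =
      d.incl ⟨mulP p (k * (reduce p θ.x * (t * reduce p n'.v - s * reduce p n.v))),
        mulP p 0, 0⟩ := by
  have hcomm : ⁅d.incl n * d.gen ^ t, d.incl n' * d.gen ^ s⁆ =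
      d.incl (n * (θ.pow t).act n' * (n' * (θ.pow s).act n)⁻¹) := by
    have h : ⁅d.incl n * d.gen ^ t, d.incl n' * d.gen ^ s⁆ =
        d.incl n * d.gen ^ t * (d.incl n' * d.gen ^ s) *
          (d.incl n' * d.gen ^ s * (d.incl n * d.gen ^ t))⁻¹ := by
      rw [commutatorElement_def]
      group
    rw [h, mul_eq, mul_eq, map_mul d.incl _ (_⁻¹), map_inv, mul_inv_rev, add_comm t s]
    group
  rw [hcomm, ← map_pow, ← map_pow, Core.pow_prime]
  congr 3
  · simp only [Core.reduce_u_pow, Core.reduce_u_mul, Core.reduce_u_inv,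
      ActionParams.reduce_u_act, ActionParams.reduce_pow_x]
    ring
  · simp only [Core.reduce_v_pow, Core.reduce_v_mul, Core.reduce_v_inv,
      ActionParams.reduce_v_act]
    ring

theorem isRegularPGroup (d : θ.Extension e P) (hp5 : 5 ≤ p) : IsRegularPGroup p P := by
  have hp : p.Prime := Fact.out
  intro x y
  obtain ⟨n, t, hx⟩ := exists_eq d x
  obtain ⟨n', s, hy⟩ := exists_eq d y
  refine ⟨(⁅x, y⁆ ^ ((p - 1) / 2)) ^ p, Subgroup.subset_closure ⟨_, Subgroup.pow_mem _
    (Subgroup.commutator_mem_commutator (Subgroup.subset_closure (by simp))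
      (Subgroup.subset_closure (by simp))) _, rfl⟩, ?_⟩
  have hhalf : (2 : ZMod p) * ((p - 1) / 2 : ℕ) = -1 := by
    have h : 2 * ((p - 1) / 2) + 1 = p := by
      have := hp.eq_two_or_odd
      omega
    have hcast := congrArg (Nat.cast : ℕ → ZMod p) h
    push_cast at hcast
    rw [CharP.cast_eq_zero (ZMod p) p] at hcast
    linear_combination hcast
  have hcomm := d.commutator_pow_prime n n' t s ((p - 1) / 2)
  rw [hx, hy, hcomm, mul_eq, pow_prime d hp5, pow_prime d hp5, pow_prime d hp5, mul_of_mulP]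
  have hprod (a b a' : ZMod p) := mul_of_mulP d a b a' 0 (t + s) 0
  simp only [zero_mul, pow_zero, mul_one, add_zero] at hprod
  rw [hprod]
  congr 4
  · simp only [Core.reduce_u_mul, Core.reduce_v_mul, ActionParams.reduce_u_act,
      ActionParams.reduce_v_act, ActionParams.reduce_pow_x, Nat.cast_add]
    linear_combination (-t * reduce p θ.x * reduce p n'.v) * hhalf
  · simp only [Core.reduce_v_mul, ActionParams.reduce_v_act]

end Params.Extension

end Extension

section ExtensionType

variable {p : ℕ} [Fact p.Prime] {θ : Params p} {e : ℕ} {P : Type} [Group P]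

namespace Params.Extension

theorem incl_pow_prime_eq_one_iff (d : θ.Extension e P) (n : Core θ.i θ.j) :
    d.incl n ^ p = 1 ↔ reduce p n.u = 0 ∧ reduce p n.v = 0 := by
  rw [← map_pow, map_eq_one_iff _ d.incl_injective, Core.pow_prime, Core.one_def, Core.mk.injEq]
  simp

theorem exists_eq_incl_of_pow_sq_eq_one (d : θ.Extension e P) (hp5 : 5 ≤ p) (he : 2 ≤ e) {x : P}
    (hx : x ^ p ^ 2 = 1) : ∃ n, x = d.incl n := by
  obtain ⟨n, t, rfl⟩ := exists_eq d x
  rw [pow_prime_pow d hp5 _ _ le_rfl, ← orderOf_dvd_iff_pow_eq_one, orderOf_gen d he,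
    ← Nat.sub_add_cancel he, pow_add] at hx
  obtain ⟨s, rfl⟩ := Nat.dvd_of_mul_dvd_mul_right (pow_pos (Fact.out : p.Prime).pos 2) hx
  exact ⟨n * ⟨1, 0, 0⟩ ^ s, by rw [pow_mul, d.gen_pow, map_mul, map_pow]⟩

theorem card_omegaSubgroup_one (d : θ.Extension e P) (hp5 : 5 ≤ p) (he : 2 ≤ e) :
    Nat.card (OmegaSubgroup p P 1) = p ^ 3 := by
  have := finite d he
  have hmem (x : P) : x ∈ OmegaSubgroup p P 1 ↔ x ^ p = 1 := by
    rw [(isRegularPGroup d hp5).mem_omegaSubgroup (isPGroup d he), pow_one]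
  let f (x : ZMod p × ZMod p × ZMod p) : OmegaSubgroup p P 1 :=
    ⟨d.incl ⟨mulP p x.1, mulP p x.2.1, x.2.2⟩, by simp [hmem, incl_pow_prime_eq_one_iff]⟩
  have hf : Function.Bijective f := by
    refine ⟨fun x y h => ?_, fun ⟨x, hx⟩ => ?_⟩
    · have h' := d.incl_injective (congrArg Subtype.val h)
      rw [Core.mk.injEq] at h'
      exact Prod.ext (mulP_injective h'.1) (Prod.ext (mulP_injective h'.2.1) h'.2.2)
    · rw [hmem] at hx
      obtain ⟨⟨u, v, c⟩, rfl⟩ := exists_eq_incl_of_pow_sq_eq_one d hp5 he (x := x)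
        (by rw [pow_two, pow_mul, hx, one_pow])
      rw [incl_pow_prime_eq_one_iff, reduce_eq_zero_iff, reduce_eq_zero_iff] at hx
      obtain ⟨⟨a, rfl : u = mulP p a⟩, ⟨b, rfl : v = mulP p b⟩⟩ := hx
      exact ⟨(a, b, c), rfl⟩
  rw [← Nat.card_eq_of_bijective f hf, Nat.card_prod, Nat.card_prod, Nat.card_zmod]
  ring

theorem mem_omegaSubgroup_iff (d : θ.Extension e P) (hp5 : 5 ≤ p) {i : ℕ} (hi : 2 ≤ i)
    (hie : i ≤ e) (n : Core θ.i θ.j) (t : ℕ) :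
    d.incl n * d.gen ^ t ∈ OmegaSubgroup p P i ↔ p ^ (e - i) ∣ t := by
  have := finite d (hi.trans hie)
  have hpos : 0 < p ^ i := pow_pos (Fact.out : p.Prime).pos i
  rw [(isRegularPGroup d hp5).mem_omegaSubgroup (isPGroup d (hi.trans hie)),
    pow_prime_pow d hp5 _ _ hi, ← orderOf_dvd_iff_pow_eq_one, orderOf_gen d (hi.trans hie),
    ← Nat.sub_add_cancel hie, pow_add, Nat.add_sub_cancel, Nat.mul_dvd_mul_iff_right hpos]

theorem card_omegaSubgroup (d : θ.Extension e P) (hp5 : 5 ≤ p) {i : ℕ} (hi : 2 ≤ i)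
    (hie : i ≤ e) : Nat.card (OmegaSubgroup p P i) = p ^ (i + 3) := by
  have hsplit : p ^ (e - 2) = p ^ (e - i) * p ^ (i - 2) := by
    rw [← pow_add]
    congr 1
    omega
  have d' := d.ofSubgroup hsplit (pow_ne_zero _ (NeZero.ne p)) (OmegaSubgroup p P i)
    (mem_omegaSubgroup_iff d hp5 hi hie)
  rw [d'.card_eq (pow_ne_zero _ (NeZero.ne p)), Core.card, ← pow_add]
  congr 1
  omega

theorem hasTypeInvariants (d : θ.Extension e P) (hp5 : 5 ≤ p) (he : 4 ≤ e) :
    HasTypeInvariants p P [e, 2, 1] := by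
  have he' : 2 ≤ e := by omega
  have := finite d he'
  refine (isRegularPGroup d hp5).hasTypeInvariants_of_card_omegaSubgroup (isPGroup d he')
    (by omega) (card_omegaSubgroup_one d hp5 he') (fun i => card_omegaSubgroup d hp5)
    fun i hi => ?_
  have htop : OmegaSubgroup p P e = ⊤ := Subgroup.eq_top_of_card_eq _ (by
    rw [card_omegaSubgroup d hp5 he' le_rfl, card_eq d he'])
  have hitop : OmegaSubgroup p P i = ⊤ := top_le_iff.1 (htop ▸ omegaSubgroup_mono hi)
  rw [hitop, Subgroup.card_top, card_eq d he']

end Params.Extension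

end ExtensionType

section OmegaTwo

open scoped commutatorElement

theorem dvd_of_zpow_mem {G : Type*} [Group G] {p : ℕ} (hp : p.Prime) {K : Subgroup G} {x : G}
    (hx : x ^ p = 1) (hxK : x ∉ K) {k : ℤ} (hk : x ^ k ∈ K) : (p : ℤ) ∣ k := by
  by_contra h
  obtain ⟨a, b, hab⟩ := (Nat.prime_iff_prime_int.1 hp).coprime_iff_not_dvd.2 h
  have hx_eq : x = (x ^ k) ^ b := by
    rw [← zpow_mul, mul_comm k, ← one_mul (x ^ (b * k)), ← one_zpow a, ← hx, ← zpow_natCast,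
      ← zpow_mul, mul_comm _ a, ← zpow_add, hab, zpow_one]
  exact hxK (hx_eq ▸ K.zpow_mem hk b)

theorem dvd_of_zpow_mul_zpow_eq_one {G : Type*} [Group G] {p : ℕ} (hp : p.Prime) {x y : G}
    (hx : x ^ p = 1) (hx1 : x ≠ 1) (hy : y ^ p = 1) (hyx : y ∉ Subgroup.zpowers x) {k l : ℤ}
    (h : x ^ k * y ^ l = 1) : (p : ℤ) ∣ k ∧ (p : ℤ) ∣ l := by
  have hl : (p : ℤ) ∣ l := by
    refine dvd_of_zpow_mem hp hy hyx (k := l) ?_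
    rw [eq_inv_of_mul_eq_one_right h]
    exact inv_mem ⟨k, rfl⟩
  refine ⟨?_, hl⟩
  obtain ⟨l, rfl⟩ := hl
  rw [zpow_mul y, zpow_natCast, hy, one_zpow, mul_one] at h
  exact dvd_of_zpow_mem hp hx (K := ⊥) (by simpa using hx1) (by simpa using h)

theorem IsRegularPGroup.mul_pow_of_commutator_le {p : ℕ} [Fact p.Prime] {G : Type} [Group G]
    [Finite G] (hreg : IsRegularPGroup p G) (hG : IsPGroup p G)
    (hcomm : commutator G ≤ OmegaSubgroup p G 1) (x y : G) : (x * y) ^ p = x ^ p * y ^ p := by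
  obtain ⟨w, hw, h⟩ := hreg x y
  have hbot : MhoOne p ⁅Subgroup.closure {x, y}, Subgroup.closure {x, y}⁆ ≤ ⊥ := by
    refine (Subgroup.closure_le _).2 ?_
    rintro _ ⟨s, hs, rfl⟩
    have := (hreg.mem_omegaSubgroup hG).1 (hcomm (Subgroup.commutator_mono le_top le_top hs))
    rwa [pow_one] at this
  rw [h, (Subgroup.mem_bot.1 (hbot hw)), mul_one]

/-- Exponentiation `k ↦ g ^ k` for an element `g` with `g ^ m = 1`. -/
def zmodPowHom {G : Type*} [Group G] {m : ℕ} (g : G) (hg : g ^ m = 1) :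
    Multiplicative (ZMod m) →* G :=
  AddMonoidHom.toMultiplicativeLeft (ZMod.lift m
    ⟨zmultiplesHom (Additive G) (Additive.ofMul g), by
      rw [zmultiplesHom_apply, natCast_zsmul, ← ofMul_pow, hg, ofMul_one]⟩)

theorem zmodPowHom_intCast {G : Type*} [Group G] {m : ℕ} (g : G) (hg : g ^ m = 1) (k : ℤ) :
    zmodPowHom g hg (Multiplicative.ofAdd (k : ZMod m)) = g ^ k :=
  congrArg Additive.toMul (ZMod.lift_coe m _ k)

theorem zmodPowHom_commute {G : Type*} [Group G] {m : ℕ} {g h : G} (hg : g ^ m = 1)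
    (hh : h ^ m = 1) (hgh : Commute g h) (u v : Multiplicative (ZMod m)) :
    Commute (zmodPowHom g hg u) (zmodPowHom h hh v) := by
  obtain ⟨k, hk⟩ := ZMod.intCast_surjective u.toAdd
  obtain ⟨l, hl⟩ := ZMod.intCast_surjective v.toAdd
  rw [← ofAdd_toAdd u, ← ofAdd_toAdd v, ← hk, ← hl, zmodPowHom_intCast, zmodPowHom_intCast]
  exact hgh.zpow_zpow k l

/-- The homogeneous abelian group of rank two and exponent `m`, written multiplicatively. -/
abbrev ZModPair (m : ℕ) := Multiplicative (ZMod m) × Multiplicative (ZMod m)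

theorem ZModPair.exists_eq {m : ℕ} (n : ZModPair m) :
    ∃ k l : ℤ, n = (.ofAdd (k : ZMod m), .ofAdd (l : ZMod m)) := by
  obtain ⟨k, hk⟩ := ZMod.intCast_surjective n.1.toAdd
  obtain ⟨l, hl⟩ := ZMod.intCast_surjective n.2.toAdd
  exact ⟨k, l, by rw [hk, hl]; rfl⟩

theorem ZModPair.card (m : ℕ) : Nat.card (ZModPair m) = m ^ 2 := by
  rw [Nat.card_prod, Nat.card_congr Multiplicative.toAdd, Nat.card_zmod, sq]

/-- The homomorphism `(k, l) ↦ z ^ k * b ^ l`. -/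
def pairHom {G : Type*} [Group G] {m : ℕ} {z b : G} (hz : z ^ m = 1) (hb : b ^ m = 1)
    (hzb : Commute z b) : ZModPair m →* G :=
  (zmodPowHom z hz).noncommCoprod (zmodPowHom b hb) (zmodPowHom_commute hz hb hzb)

theorem pairHom_intCast {G : Type*} [Group G] {m : ℕ} {z b : G} (hz : z ^ m = 1)
    (hb : b ^ m = 1) (hzb : Commute z b) (k l : ℤ) :
    pairHom hz hb hzb (.ofAdd (k : ZMod m), .ofAdd (l : ZMod m)) = z ^ k * b ^ l := by
  rw [← zmodPowHom_intCast z hz, ← zmodPowHom_intCast b hb]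
  rfl

variable {p : ℕ}

/-- The automorphism of `ZMod (p ^ 2) × ZMod (p ^ 2)` which fixes `(1, 0)` and maps `(0, 1)` to
`(p s, 1 + p t)`. -/
def shear (s t : ZMod p) : MulAut (ZModPair (p ^ 2)) where
  toFun n := (.ofAdd (n.1.toAdd + mulP p (s * reduce p n.2.toAdd)),
    .ofAdd (n.2.toAdd + mulP p (t * reduce p n.2.toAdd)))
  invFun n := (.ofAdd (n.1.toAdd - mulP p (s * reduce p n.2.toAdd)),
    .ofAdd (n.2.toAdd - mulP p (t * reduce p n.2.toAdd)))
  left_inv n := by simp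
  right_inv n := by simp
  map_mul' n n' := by
    simp only [Prod.fst_mul, Prod.snd_mul, toAdd_mul, map_add, mul_add, Prod.mk_mul_mk, ← ofAdd_add]
    congr 2 <;> ring

theorem shear_intCast (s t k l : ℤ) :
    shear (s : ZMod p) t (.ofAdd (k : ZMod (p ^ 2)), .ofAdd (l : ZMod (p ^ 2))) =
      (.ofAdd ((k + p * (s * l) : ℤ) : ZMod (p ^ 2)),
        .ofAdd ((l + p * (t * l) : ℤ) : ZMod (p ^ 2))) := by
  have mulP_mul_intCast (r : ℤ) : mulP p (r * l) = ((p * (r * l) : ℤ) : ZMod (p ^ 2)) := by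
    rw [← Int.cast_mul, mulP_intCast]
    push_cast
    rfl
  simp only [shear, MulEquiv.coe_mk, Equiv.coe_fn_mk, toAdd_ofAdd, map_intCast, mulP_mul_intCast,
    Int.cast_add]

theorem Core.mk_zpow {i j : ZMod p} (u v : ZMod (p ^ 2)) (c : ZMod p) (k : ℤ) :
    (⟨u, v, c⟩ : Core i j) ^ k = ⟨k * u, k * v, k * c⟩ := by
  obtain ⟨n, rfl | rfl⟩ := k.eq_nat_or_neg
  · rw [zpow_natCast, mk_pow]
    simp
  · rw [zpow_neg, zpow_natCast, mk_pow, inv_mk]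
    simp

/-- `Core i j` as an extension of the subgroup of elements `(u, v, 0)`. -/
noncomputable def Core.cyclicExtension [NeZero p] {i j s t : ZMod p} (hs : s = -2 * i)
    (ht : t = -2 * j) : CyclicExtension (shear s t) 1 p (Core i j) :=
  .ofCard
    { toFun n := ⟨n.1.toAdd, n.2.toAdd, 0⟩
      map_one' := rfl
      map_mul' n n' := by simp [mk_mul_mk] }
    ⟨0, 0, 1⟩
    (fun n n' h => by
      obtain ⟨hu, hv, -⟩ := Core.ext_iff.1 h
      exact Prod.ext hu hv)
    (fun n => by
      ext
      · simp [shear, mk_mul_mk, inv_mk, two_mul, add_mul, hs]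
        ring
      · simp [shear, mk_mul_mk, inv_mk, two_mul, add_mul, ht]
        ring
      · simp [mk_mul_mk, inv_mk])
    (by rw [mk_pow, map_one]; simp [one_def])
    (fun t n h => by
      rw [mk_zpow] at h
      simpa [ZMod.intCast_zmod_eq_zero_iff_dvd] using (Core.ext_iff.1 h).2.2)
    (by rw [card, ZModPair.card]; ring)

theorem conj_pairHom {G : Type*} [Group G] {z b c : G} (hz : z ^ p ^ 2 = 1) (hb : b ^ p ^ 2 = 1)
    (hzb : Commute z b) (hcz : Commute c z) {k l : ℤ}
    (hcb : c * b * c⁻¹ = z ^ (p * k) * b ^ (p * l) * b) (n : ZModPair (p ^ 2)) :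
    c * pairHom hz hb hzb n * c⁻¹ = pairHom hz hb hzb (shear (k : ZMod p) l n) := by
  obtain ⟨u, v, rfl⟩ := n.exists_eq
  rw [shear_intCast, pairHom_intCast, pairHom_intCast]
  have hconj : (c * b * c⁻¹) ^ v = z ^ (p * (k * v)) * b ^ (v + p * (l * v)) := by
    rw [hcb, mul_assoc, ← zpow_add_one, (hzb.zpow_zpow _ _).mul_zpow, ← zpow_mul, ← zpow_mul]
    ring_nf
  calc c * (z ^ u * b ^ v) * c⁻¹ = z ^ u * (c * b * c⁻¹) ^ v := by
        rw [conj_zpow, ← mul_assoc, (hcz.zpow_right u).eq]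
        group
    _ = z ^ (u + p * (k * v)) * b ^ (v + p * (l * v)) := by rw [hconj, ← mul_assoc, ← zpow_add]

section

variable [Fact p.Prime] {G : Type*} [Group G] {z b : G} (hz : z ^ p ^ 2 = 1)
  (hb : b ^ p ^ 2 = 1) (hzb : Commute z b) (hz1 : z ^ p ≠ 1)
  (hbz : b ^ p ∉ Subgroup.zpowers (z ^ p))

include hz hb hzb hz1 hbz

theorem dvd_of_pow_eq_one {k l : ℤ} (h : (z ^ k * b ^ l) ^ p = 1) :
    (p : ℤ) ∣ k ∧ (p : ℤ) ∣ l := by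
  have h' : (z ^ p) ^ k * (b ^ p) ^ l = 1 := by
    rw [← h, (hzb.zpow_zpow k l).mul_pow, ← zpow_natCast, ← zpow_natCast, ← zpow_natCast,
      ← zpow_natCast, zpow_comm z, zpow_comm b]
  exact dvd_of_zpow_mul_zpow_eq_one Fact.out (by rwa [← pow_mul, ← sq]) hz1
    (by rwa [← pow_mul, ← sq]) hbz h'

theorem pairHom_injective : Function.Injective (pairHom hz hb hzb) := by
  refine (injective_iff_map_eq_one _).2 fun n hn => ?_
  obtain ⟨k, l, rfl⟩ := n.exists_eq
  rw [pairHom_intCast] at hn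
  obtain ⟨⟨k, rfl⟩, ⟨l, rfl⟩⟩ := dvd_of_pow_eq_one hz hb hzb hz1 hbz (by rw [hn, one_pow])
  rw [zpow_mul, zpow_mul, zpow_natCast, zpow_natCast] at hn
  obtain ⟨⟨k, rfl⟩, ⟨l, rfl⟩⟩ := dvd_of_zpow_mul_zpow_eq_one (p := p) Fact.out
    (by rwa [← pow_mul, ← sq]) hz1 (by rwa [← pow_mul, ← sq]) hbz hn
  have hp2 : (p : ZMod (p ^ 2)) * p = 0 := by rw [← sq, ← Nat.cast_pow, ZMod.natCast_self]
  push_cast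
  rw [← mul_assoc, ← mul_assoc, hp2, zero_mul, zero_mul]
  rfl

theorem exists_eq_of_mem_range_pairHom {x : G} (hx : x ∈ (pairHom hz hb hzb).range)
    (hxp : x ^ p = 1) : ∃ k l : ℤ, x = z ^ (p * k) * b ^ (p * l) := by
  obtain ⟨n, rfl⟩ := hx
  obtain ⟨k, l, rfl⟩ := n.exists_eq
  rw [pairHom_intCast] at hxp ⊢
  obtain ⟨⟨k, rfl⟩, ⟨l, rfl⟩⟩ := dvd_of_pow_eq_one hz hb hzb hz1 hbz hxp
  exact ⟨k, l, rfl⟩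

end

section

variable [hp : Fact p.Prime] {G : Type} [Group G] [Finite G] (hreg : IsRegularPGroup p G)
  (hG : IsPGroup p G) (hcard : Nat.card G = p ^ 5) (hcard1 : Nat.card (OmegaSubgroup p G 1) = p ^ 3)

include hreg hG hcard hcard1

theorem commutator_le_omegaSubgroup : commutator G ≤ OmegaSubgroup p G 1 := by
  have := hreg.omegaSubgroup_normal hG 1
  rw [← Subgroup.Normal.quotient_commutative_iff_commutator_le]
  refine IsPGroup.isMulCommutative_of_card_eq_prime_sq (p := p) ?_
  have h := (OmegaSubgroup p G 1).card_eq_card_quotient_mul_card_subgroup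
  rw [hcard, hcard1, pow_add p 2 3] at h
  exact (Nat.eq_of_mul_eq_mul_right (pow_pos hp.out.pos 3) h).symm

theorem exists_pow_not_mem_zpowers {y : G} (hy : y ^ p = 1) :
    ∃ b : G, b ^ p ∉ Subgroup.zpowers y := by
  by_contra! h
  let powHom : G →* G := MonoidHom.mk' (· ^ p)
    (hreg.mul_pow_of_commutator_le hG (commutator_le_omegaSubgroup hreg hG hcard hcard1))
  have hker : powHom.ker = OmegaSubgroup p G 1 := by
    ext x
    rw [hreg.mem_omegaSubgroup hG, pow_one, MonoidHom.mem_ker]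
    rfl
  have hrange : Nat.card powHom.range ≤ p := by
    refine (Subgroup.card_le_of_le (K := Subgroup.zpowers y) ?_).trans ?_
    · rintro _ ⟨x, rfl⟩
      exact h x
    · rw [Nat.card_zpowers]
      exact orderOf_le_of_pow_eq_one hp.out.pos hy
  have hmul := powHom.ker.card_mul_index
  rw [Subgroup.index_ker, hker, hcard, hcard1, pow_add p 3 2] at hmul
  rw [Nat.eq_of_mul_eq_mul_left (pow_pos hp.out.pos 3) hmul] at hrange
  nlinarith [hp.out.one_lt]

omit hcard in
theorem exists_pow_eq_one_not_mem_range {z b : G} (hz : z ^ p ^ 2 = 1) (hb : b ^ p ^ 2 = 1)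
    (hzb : Commute z b) (hz1 : z ^ p ≠ 1) (hbz : b ^ p ∉ Subgroup.zpowers (z ^ p)) :
    ∃ c : G, c ^ p = 1 ∧ c ∉ (pairHom hz hb hzb).range := by
  by_contra! h
  let torsionHom : ZModPair p →* G := pairHom (z := z ^ p) (b := b ^ p) (by rwa [← pow_mul, ← sq])
    (by rwa [← pow_mul, ← sq]) (hzb.pow_pow p p)
  have hle : OmegaSubgroup p G 1 ≤ torsionHom.range := by
    intro x hx
    rw [hreg.mem_omegaSubgroup hG, pow_one] at hx
    obtain ⟨k, l, rfl⟩ := exists_eq_of_mem_range_pairHom hz hb hzb hz1 hbz (h x hx) hx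
    refine ⟨(.ofAdd (k : ZMod p), .ofAdd (l : ZMod p)), ?_⟩
    rw [pairHom_intCast, zpow_mul, zpow_mul, zpow_natCast, zpow_natCast]
  have hcard_le := (Subgroup.card_le_of_le hle).trans
    (Nat.card_le_card_of_surjective _ torsionHom.rangeRestrict_surjective)
  rw [hcard1, ZModPair.card] at hcard_le
  exact absurd ((Nat.pow_le_pow_iff_right hp.out.one_lt).1 hcard_le) (by norm_num)

theorem exists_conj_eq {z b c : G} (hz : z ^ p ^ 2 = 1) (hb : b ^ p ^ 2 = 1) (hzb : Commute z b)
    (hz1 : z ^ p ≠ 1) (hbz : b ^ p ∉ Subgroup.zpowers (z ^ p)) :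
    ∃ k l : ℤ, c * b * c⁻¹ = z ^ (p * k) * b ^ (p * l) * b := by
  have hindex : (pairHom hz hb hzb).range.index = p := by
    have h := (pairHom hz hb hzb).range.card_mul_index
    rw [Nat.card_congr (MonoidHom.ofInjective
      (pairHom_injective hz hb hzb hz1 hbz)).symm.toEquiv, ZModPair.card, ← pow_mul, hcard] at h
    exact Nat.eq_of_mul_eq_mul_left (pow_pos hp.out.pos 4) h
  have hnormal : (pairHom hz hb hzb).range.Normal := Subgroup.normal_of_index_eq_minFac_card (by
    rw [hindex, hcard, hp.out.pow_minFac (by norm_num)])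
  have hb_mem : b ∈ (pairHom hz hb hzb).range :=
    ⟨(.ofAdd ((0 : ℤ) : ZMod (p ^ 2)), .ofAdd ((1 : ℤ) : ZMod (p ^ 2))), by
      rw [pairHom_intCast, zpow_zero, one_mul, zpow_one]⟩
  have hcomm_pow : ⁅c, b⁆ ^ p = 1 := by
    rw [← pow_one p, ← hreg.mem_omegaSubgroup hG]
    exact commutator_le_omegaSubgroup hreg hG hcard hcard1
      (Subgroup.commutator_mem_commutator (Subgroup.mem_top c) (Subgroup.mem_top b))
  obtain ⟨k, l, h⟩ := exists_eq_of_mem_range_pairHom hz hb hzb hz1 hbz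
    (mul_mem (hnormal.conj_mem b hb_mem c) (inv_mem hb_mem)) hcomm_pow
  exact ⟨k, l, mul_inv_eq_iff_eq_mul.1 h⟩

theorem exists_core_mulEquiv (hp2 : p ≠ 2) (hexp : ∀ x : G, x ^ p ^ 2 = 1) {z : G}
    (hz : z ∈ Subgroup.center G) (hz1 : z ^ p ≠ 1) :
    ∃ (i j : ZMod p) (f : Core i j ≃* G), f ⟨1, 0, 0⟩ = z := by
  obtain ⟨b, hbz⟩ := exists_pow_not_mem_zpowers hreg hG hcard hcard1 (y := z ^ p)
    (by rw [← pow_mul, ← sq, hexp])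
  have hzx (x : G) : Commute z x := (Subgroup.mem_center_iff.1 hz x).symm
  obtain ⟨c, hc, hcF⟩ := exists_pow_eq_one_not_mem_range hreg hG hcard1 (hexp z) (hexp b) (hzx b)
    hz1 hbz
  obtain ⟨k, l, hcb⟩ := exists_conj_eq hreg hG hcard hcard1 (c := c) (hexp z) (hexp b) (hzx b) hz1
    hbz
  have two_ne_zero : (2 : ZMod p) ≠ 0 := Ring.two_ne_zero (by rwa [ringChar.eq _ p])
  let d : CyclicExtension (shear (k : ZMod p) l) 1 p G := .ofCard (pairHom _ _ (hzx b)) c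
    (pairHom_injective _ _ _ hz1 hbz) (conj_pairHom (hexp z) (hexp b) (hzx b) (hzx c).symm hcb)
    (by rw [hc, map_one])
    (fun t n h => dvd_of_zpow_mem hp.out hc hcF ⟨n, h.symm⟩)
    (by rw [hcard, ZModPair.card]; ring)
  let d' : CyclicExtension (shear (k : ZMod p) l) 1 p
      (Core (-(k : ZMod p) / 2) (-(l : ZMod p) / 2)) :=
    Core.cyclicExtension (by field_simp) (by field_simp)
  obtain ⟨f, hf, -⟩ := d'.exists_mulEquiv d
  have hz_eq := pairHom_intCast (hexp z) (hexp b) (hzx b) 1 0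
  rw [zpow_one, zpow_zero, mul_one, Int.cast_one, Int.cast_zero] at hz_eq
  exact ⟨_, _, f, (hf (.ofAdd 1, .ofAdd 0)).trans hz_eq⟩

end

end OmegaTwo

section CoreAut

variable {p : ℕ} {i j : ZMod p}

namespace Core

theorem exists_eq_pow_mul_pow_mul_pow [NeZero p] (n : Core i j) :
    ∃ k l m : ℕ, n = ⟨1, 0, 0⟩ ^ k * ⟨0, 1, 0⟩ ^ l * ⟨0, 0, 1⟩ ^ m := by
  obtain ⟨k, hk⟩ := ZMod.natCast_zmod_surjective (n.u - mulP p (i * (reduce p n.v * n.c)))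
  obtain ⟨l, hl⟩ := ZMod.natCast_zmod_surjective (n.v - mulP p (j * (reduce p n.v * n.c)))
  obtain ⟨m, hm⟩ := ZMod.natCast_zmod_surjective n.c
  refine ⟨k, l, m, ?_⟩
  ext <;> simp [mk_pow, mk_mul_mk, hk, hl, hm]

theorem hom_ext [NeZero p] {M : Type*} [Monoid M] {f g : Core i j →* M}
    (hz : f ⟨1, 0, 0⟩ = g ⟨1, 0, 0⟩) (hb : f ⟨0, 1, 0⟩ = g ⟨0, 1, 0⟩)
    (hc : f ⟨0, 0, 1⟩ = g ⟨0, 0, 1⟩) : f = g := by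
  ext n
  obtain ⟨k, l, m, rfl⟩ := n.exists_eq_pow_mul_pow_mul_pow
  simp only [map_mul, map_pow, hz, hb, hc]

theorem exists_eq_mulP_of_pow_eq_one [Fact p.Prime] {n : Core i j} (hn : n ^ p = 1) :
    ∃ f g c : ZMod p, n = ⟨mulP p f, mulP p g, c⟩ := by
  rw [pow_prime, one_def, mk.injEq, mulP_eq_zero, mulP_eq_zero, reduce_eq_zero_iff,
    reduce_eq_zero_iff] at hn
  obtain ⟨⟨f, hf⟩, ⟨g, hg⟩, -⟩ := hn
  exact ⟨f, g, n.c, Core.ext hf hg rfl⟩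

section Map

variable {i' j' : ZMod p} {k u l : ZMod (p ^ 2)} {m n r q : ZMod p}

section

variable [NeZero p] {f : Core i' j' →* Core i j} (hz : f ⟨1, 0, 0⟩ = ⟨k, 0, 0⟩)
  (hb : f ⟨0, 1, 0⟩ = ⟨u, l, r⟩) (hc : f ⟨0, 0, 1⟩ = ⟨mulP p m, mulP p n, q⟩)

include hz hb hc

theorem reduce_u_map (a : Core i' j') :
    reduce p (f a).u = reduce p k * reduce p a.u + reduce p a.v * reduce p u := by
  obtain ⟨k, l, m, rfl⟩ := a.exists_eq_pow_mul_pow_mul_pow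
  simp [hz, hb, hc, mul_comm]

theorem reduce_v_map (a : Core i' j') : reduce p (f a).v = reduce p a.v * reduce p l := by
  obtain ⟨k, l, m, rfl⟩ := a.exists_eq_pow_mul_pow_mul_pow
  simp [hz, hb, hc]

theorem c_map (a : Core i' j') : (f a).c = reduce p a.v * r + a.c * q := by
  obtain ⟨k, l, m, rfl⟩ := a.exists_eq_pow_mul_pow_mul_pow
  rw [map_mul, map_mul, map_pow, map_pow, map_pow, hz, hb, hc]
  simp [mk_pow, mk_mul_mk]

theorem map_mk_mulP (a b : ZMod p) :
    f ⟨mulP p a, mulP p b, 0⟩ =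
      ⟨mulP p (reduce p k * a + b * reduce p u), mulP p (b * reduce p l), 0⟩ := by
  obtain ⟨a, rfl⟩ := reduce_surjective a
  obtain ⟨b, rfl⟩ := reduce_surjective b
  have h := pow_prime (⟨a, b, 0⟩ : Core i' j')
  rw [← h, map_pow, pow_prime, reduce_u_map hz hb hc, reduce_v_map hz hb hc]

end

theorem map_structure_constants [Fact p.Prime] (hp2 : p ≠ 2) {f : Core i' j' →* Core i j}
    (hz : f ⟨1, 0, 0⟩ = ⟨k, 0, 0⟩) (hb : f ⟨0, 1, 0⟩ = ⟨u, l, r⟩)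
    (hc : f ⟨0, 0, 1⟩ = ⟨mulP p m, mulP p n, q⟩) :
    reduce p k * i' + j' * reduce p u = reduce p l * q * i ∧
      reduce p l * j' = reduce p l * q * j := by
  have two_ne_zero : (2 : ZMod p) ≠ 0 := Ring.two_ne_zero (by rwa [ringChar.eq _ p])
  have hcomm : (⟨0, 1, 0⟩ : Core i' j') * ⟨0, 0, 1⟩ =
      ⟨mulP p (2 * i'), mulP p (2 * j'), 0⟩ * (⟨0, 0, 1⟩ * ⟨0, 1, 0⟩) := by
    ext <;> simp [mk_mul_mk, two_mul]
    ring
  have h := congrArg f hcomm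
  rw [map_mul f, map_mul f, map_mul f, map_mk_mulP hz hb hc, hb, hc] at h
  simp only [mk_mul_mk, mk.injEq, map_add, reduce_mulP, add_zero, zero_add, mul_zero, mul_neg,
    zero_mul, sub_zero, zero_sub, map_neg, map_zero, mul_comm q] at h
  obtain ⟨hu, hv, -⟩ := h
  constructor <;> refine mul_left_cancel₀ two_ne_zero (mulP_injective ?_)
  · rw [show 2 * (reduce p l * q * i) = i * (reduce p l * q) + i * (reduce p l * q) by ring,
      show 2 * (reduce p k * i' + j' * reduce p u) =
        reduce p k * (2 * i') + 2 * j' * reduce p u by ring, map_add, map_add]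
    linear_combination -hu
  · rw [show 2 * (reduce p l * q * j) = j * (reduce p l * q) + j * (reduce p l * q) by ring,
      show 2 * (reduce p l * j') = 2 * j' * reduce p l by ring, map_add]
    linear_combination -hv

end Map

end Core

variable [Fact p.Prime] {β : MulAut (Core i j)} {x v : ZMod (p ^ 2)} {w r s t : ZMod p}

section

variable (hz : β ⟨1, 0, 0⟩ = ⟨1, 0, 0⟩) (hb : β ⟨0, 1, 0⟩ = ⟨x, v, w⟩)
  (hc : β ⟨0, 0, 1⟩ = ⟨mulP p r, mulP p s, t⟩)

include hz hb hc

theorem Core.reduce_v_eq_one {N : ℕ} (hβ : β ^ p ^ N = 1) : reduce p v = 1 := by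
  have hpow (k : ℕ) : reduce p ((β ^ k) ⟨0, 1, 0⟩).v = reduce p v ^ k := by
    induction k with
    | zero => simp
    | succ k ih =>
      rw [pow_succ' β, MulAut.mul_apply, pow_succ (reduce p v), ← ih]
      exact Core.reduce_v_map (f := β.toMonoidHom) hz hb hc _
  simpa [hβ, ZMod.pow_card_pow] using (hpow (p ^ N)).symm

theorem Core.t_eq_one {N : ℕ} (hβ : β ^ p ^ N = 1) : t = 1 := by
  have hpow (k : ℕ) :
      reduce p ((β ^ k) ⟨0, 0, 1⟩).v = 0 ∧ ((β ^ k) ⟨0, 0, 1⟩).c = t ^ k := by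
    induction k with
    | zero => simp
    | succ k ih =>
      rw [pow_succ' β, MulAut.mul_apply]
      have hv := Core.reduce_v_map (f := β.toMonoidHom) hz hb hc ((β ^ k) ⟨0, 0, 1⟩)
      have hc := Core.c_map (f := β.toMonoidHom) hz hb hc ((β ^ k) ⟨0, 0, 1⟩)
      rw [ih.1, zero_mul] at hv hc
      rw [zero_add, ih.2, ← pow_succ] at hc
      exact ⟨hv, hc⟩
  simpa [hβ, ZMod.pow_card_pow] using (hpow (p ^ N)).2.symm

end

theorem ActionParams.exists_eq_act (hp2 : p ≠ 2) (hz : β ⟨1, 0, 0⟩ = ⟨1, 0, 0⟩) {N : ℕ}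
    (hβ : β ^ p ^ N = 1) :
    ∃ t : ActionParams p, reduce p t.x * j = 0 ∧ ∀ n, β n = t.act n := by
  obtain ⟨x, v, w, hb⟩ : ∃ x v w, β ⟨0, 1, 0⟩ = ⟨x, v, w⟩ := ⟨_, _, _, rfl⟩
  obtain ⟨f, g, s, hc⟩ := Core.exists_eq_mulP_of_pow_eq_one (n := β ⟨0, 0, 1⟩) (by
    rw [← map_pow, Core.pow_prime, map_zero, map_zero]
    exact map_one β)
  have hv := Core.reduce_v_eq_one hz hb hc hβ
  obtain rfl := Core.t_eq_one hz hb hc hβ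
  have hj : reduce p x * j = 0 := by
    have h := (Core.map_structure_constants hp2 (f := β.toMonoidHom) hz hb hc).1
    rw [hv, map_one, one_mul, one_mul, one_mul] at h
    linear_combination h
  obtain ⟨y, hy⟩ := reduce_eq_zero_iff.1 (show reduce p (v - 1) = 0 by
    rw [map_sub, hv, map_one, sub_self])
  let t : ActionParams p := ⟨x, f, y, g, w⟩
  have heq : β.toMonoidHom = t.hom hj := by
    refine Core.hom_ext (hz.trans ?_) (hb.trans ?_) (hc.trans ?_)
    · ext <;> simp [ActionParams.hom_apply, ActionParams.act]
    · ext <;> simp [ActionParams.hom_apply, ActionParams.act, t, ← hy]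
    · ext <;> simp [ActionParams.hom_apply, ActionParams.act, t]
  exact ⟨t, hj, DFunLike.congr_fun heq⟩

end CoreAut

section StructureTheorem

variable {p : ℕ} [hp : Fact p.Prime] {G : Type} [Group G] [Finite G] (hreg : IsRegularPGroup p G)
  (hG : IsPGroup p G) {e : ℕ} {a : G}

include hreg hG

theorem zpow_orderOf_mem_omegaSubgroup_iff {i k : ℕ} (ha : orderOf a = p ^ (k + i)) (t : ℤ) :
    a ^ t ∈ OmegaSubgroup p G i ↔ ((p ^ k : ℕ) : ℤ) ∣ t := by
  have hpi : ((p ^ i : ℕ) : ℤ) ≠ 0 := mod_cast pow_ne_zero i hp.out.ne_zero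
  rw [hreg.mem_omegaSubgroup hG, ← zpow_natCast, ← zpow_mul, ← orderOf_dvd_iff_zpow_eq_one, ha,
    pow_add, Nat.cast_mul, mul_dvd_mul_iff_right hpi]

theorem commutator_le_omegaSubgroup_two (he : 2 ≤ e) (hcard : Nat.card G = p ^ (e + 3))
    (hcard2 : Nat.card (OmegaSubgroup p G 2) = p ^ 5) (ha : orderOf a = p ^ e) :
    commutator G ≤ OmegaSubgroup p G 2 := by
  obtain ⟨k, rfl⟩ := Nat.exists_eq_add_of_le' he
  have := hreg.omegaSubgroup_normal hG 2
  have hindex : Nat.card (G ⧸ OmegaSubgroup p G 2) = p ^ k := by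
    have h := (OmegaSubgroup p G 2).card_eq_card_quotient_mul_card_subgroup
    rw [hcard, hcard2, show k + 2 + 3 = k + 5 by rfl, pow_add] at h
    exact (Nat.eq_of_mul_eq_mul_right (pow_pos hp.out.pos 5) h).symm
  have horder : orderOf (a : G ⧸ OmegaSubgroup p G 2) = p ^ k := by
    refine Nat.dvd_right_iff_eq.1 fun m => ?_
    rw [orderOf_dvd_iff_pow_eq_one, ← QuotientGroup.mk_pow, QuotientGroup.eq_one_iff,
      ← zpow_natCast, zpow_orderOf_mem_omegaSubgroup_iff hreg hG ha, Int.natCast_dvd_natCast]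
  have hcyclic : IsCyclic (G ⧸ OmegaSubgroup p G 2) :=
    isCyclic_of_orderOf_eq_card _ (horder.trans hindex.symm)
  let := hcyclic.commGroup
  rw [← QuotientGroup.ker_mk' (OmegaSubgroup p G 2)]
  exact Abelianization.commutator_subset_ker _

theorem pow_mem_center (he : 4 ≤ e) (hcard : Nat.card G = p ^ (e + 3))
    (hcard2 : Nat.card (OmegaSubgroup p G 2) = p ^ 5) (ha : orderOf a = p ^ e) :
    a ^ p ^ (e - 2) ∈ Subgroup.center G := by
  rw [Subgroup.mem_center_iff]
  intro x
  have h := commutator_le_omegaSubgroup_two hreg hG (by omega) hcard hcard2 ha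
    (Subgroup.commutator_mem_commutator (Subgroup.mem_top (a ^ p ^ (e - 4))⁻¹)
      (Subgroup.mem_top x))
  rw [hreg.mem_omegaSubgroup hG, commutatorElement_def, inv_inv] at h
  rw [show e - 2 = e - 4 + 2 by omega, pow_add, pow_mul]
  refine (hreg.commute_pow_pow_iff hG 2 x (a ^ p ^ (e - 4))).2 ?_
  rw [← h]
  group

theorem exists_core_mulEquiv_omegaSubgroup_two (hp2 : p ≠ 2) (he : 4 ≤ e)
    (hcard : Nat.card G = p ^ (e + 3)) (hcard1 : Nat.card (OmegaSubgroup p G 1) = p ^ 3)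
    (hcard2 : Nat.card (OmegaSubgroup p G 2) = p ^ 5) (ha : orderOf a = p ^ e) :
    ∃ (i j : ZMod p) (f : Core i j ≃* OmegaSubgroup p G 2), f ⟨1, 0, 0⟩ = a ^ p ^ (e - 2) := by
  let H := OmegaSubgroup p G 2
  have hH : IsRegularPGroup p H := hreg.of_injective (f := H.subtype) H.subtype_injective
  have hpH : IsPGroup p H := hG.to_subgroup H
  have hexp (x : H) : x ^ p ^ 2 = 1 := Subtype.ext ((hreg.mem_omegaSubgroup hG).1 x.2)
  have hcardH1 : Nat.card (OmegaSubgroup p H 1) = p ^ 3 := by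
    have hcomap : OmegaSubgroup p H 1 = (OmegaSubgroup p G 1).subgroupOf H := by
      ext x
      rw [hH.mem_omegaSubgroup hpH, Subgroup.mem_subgroupOf, hreg.mem_omegaSubgroup hG,
        Subtype.ext_iff]
      rfl
    rw [hcomap, ← hcard1]
    exact Nat.card_congr (Subgroup.subgroupOfEquivOfLe (omegaSubgroup_mono one_le_two)).toEquiv
  have hcenter := pow_mem_center hreg hG he hcard hcard2 ha
  let z : H := ⟨a ^ p ^ (e - 2), (hreg.mem_omegaSubgroup hG).2 (by
    rw [← pow_mul, ← pow_add, Nat.sub_add_cancel (by omega), ← ha, pow_orderOf_eq_one])⟩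
  have hz : z ∈ Subgroup.center H := Subgroup.mem_center_iff.2 fun x =>
    Subtype.ext (Subgroup.mem_center_iff.1 hcenter x)
  have hz1 : z ^ p ≠ 1 := by
    intro h
    have h : a ^ p ^ (e - 2 + 1) = 1 := by
      rw [pow_succ, pow_mul]
      exact congrArg Subtype.val h
    rw [← orderOf_dvd_iff_pow_eq_one, ha, Nat.pow_dvd_pow_iff_le_right hp.out.one_lt] at h
    omega
  obtain ⟨i, j, f, hf⟩ := exists_core_mulEquiv hH hpH hcard2 hcardH1 hp2 hexp hz hz1
  exact ⟨i, j, f, congrArg Subtype.val hf⟩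

theorem exists_params_extension (hp5 : 5 ≤ p) (he : 4 ≤ e)
    (hcard : Nat.card G = p ^ (e + 3)) (hcard1 : Nat.card (OmegaSubgroup p G 1) = p ^ 3)
    (hcard2 : Nat.card (OmegaSubgroup p G 2) = p ^ 5) (ha : orderOf a = p ^ e) :
    ∃ θ : Params p, Nonempty (θ.Extension e G) := by
  have hp2 : p ≠ 2 := by omega
  obtain ⟨i, j, f, hf⟩ :=
    exists_core_mulEquiv_omegaSubgroup_two hreg hG hp2 he hcard hcard1 hcard2 ha
  have := hreg.omegaSubgroup_normal hG 2
  let β : MulAut (Core i j) := MulAut.congr f.symm (MulAut.conjNormal a)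
  have hβ (n : Core i j) : (f (β n) : G) = a * f n * a⁻¹ := by
    simp [β]
  have hβz : β ⟨1, 0, 0⟩ = ⟨1, 0, 0⟩ := by
    apply f.injective
    apply Subtype.ext
    rw [hβ, hf]
    group
  have hβpow : β ^ p ^ e = 1 := by
    rw [← map_pow, ← map_pow, ← ha, pow_orderOf_eq_one, map_one, map_one]
  obtain ⟨t, hj, ht⟩ := ActionParams.exists_eq_act hp2 hβz hβpow
  let θ : Params p := { t with i := i, j := j, reduce_x_mul_j := hj }
  refine ⟨θ, ⟨.ofCard ((OmegaSubgroup p G 2).subtype.comp f.toMonoidHom) a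
    (Subtype.val_injective.comp f.injective) (fun n => ?_) hf.symm (fun t n h => ?_) ?_⟩⟩
  · exact (hβ n).symm.trans (congrArg (fun n => (f n : G)) (ht n))
  · rw [← zpow_orderOf_mem_omegaSubgroup_iff hreg hG (i := 2) (by rw [ha]; congr 1; omega), h]
    exact (f n).2
  · rw [hcard, Core.card, ← pow_add]
    congr 1
    omega

end StructureTheorem

section CoordChange

variable {p : ℕ} {i j i' j' : ZMod p}

/-- A homomorphism `Core i' j' →* Core i j` sending `z ↦ z ^ k`, `b ↦ (u, l, r)` and
`c ↦ (p m, p n, q)`. -/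
structure CoordChange (i' j' i j : ZMod p) where
  k : ℕ
  u : ZMod (p ^ 2)
  l : ZMod (p ^ 2)
  m : ZMod p
  n : ZMod p
  r : ZMod p
  q : ZMod p
  map_i : k * i' + j' * reduce p u = reduce p l * q * i
  map_j : reduce p l * j' = reduce p l * q * j

namespace CoordChange

/-- The homomorphism whose values on `z`, `b` and `c` are recorded in `φ`. -/
def hom (φ : CoordChange i' j' i j) : Core i' j' →* Core i j where
  toFun a := ⟨φ.k * a.u + φ.u * a.v + mulP p (φ.m * a.c), φ.l * a.v + mulP p (φ.n * a.c),
    φ.r * reduce p a.v + φ.q * a.c⟩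
  map_one' := by ext <;> simp [Core.one_def]
  map_mul' a b := by
    have map_form : Core.form (i := i) (j := j)
        ⟨φ.k * a.u + φ.u * a.v + mulP p (φ.m * a.c), φ.l * a.v + mulP p (φ.n * a.c),
          φ.r * reduce p a.v + φ.q * a.c⟩
        ⟨φ.k * b.u + φ.u * b.v + mulP p (φ.m * b.c), φ.l * b.v + mulP p (φ.n * b.c),
          φ.r * reduce p b.v + φ.q * b.c⟩ = reduce p φ.l * φ.q * a.form b := by
      simp only [Core.form, map_add, map_mul, reduce_mulP]
      ring
    have map_i_form : i * (reduce p φ.l * φ.q * a.form b) =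
        reduce p φ.k * (i' * a.form b) + reduce p φ.u * (j' * a.form b) := by
      rw [map_natCast]
      linear_combination -(a.form b) * φ.map_i
    have map_j_form : j * (reduce p φ.l * φ.q * a.form b) =
        reduce p φ.l * (j' * a.form b) := by
      linear_combination -(a.form b) * φ.map_j
    simp only [Core.mul_def, map_form, map_i_form, map_j_form]
    ext
    · simp only [map_add, mul_add, mul_mulP]
      ring
    · simp only [map_add, mul_add, mul_mulP]
      ring
    · simp only [map_add, mul_add, reduce_mulP]
      ring

theorem hom_apply (φ : CoordChange i' j' i j) (a : Core i' j') : φ.hom a =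
    ⟨φ.k * a.u + φ.u * a.v + mulP p (φ.m * a.c), φ.l * a.v + mulP p (φ.n * a.c),
      φ.r * reduce p a.v + φ.q * a.c⟩ := rfl

theorem hom_mk_mulP (φ : CoordChange i' j' i j) (a b c : ZMod p) :
    φ.hom ⟨mulP p a, mulP p b, c⟩ = ⟨mulP p (φ.k * a + reduce p φ.u * b + φ.m * c),
      mulP p (reduce p φ.l * b + φ.n * c), φ.q * c⟩ := by
  simp [hom_apply, mul_mulP]

/-- The conditions under which `φ.hom` is an isomorphism. -/
structure IsNondegenerate (φ : CoordChange i' j' i j) : Prop where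
  k_ne_zero : (φ.k : ZMod p) ≠ 0
  reduce_l_ne_zero : reduce p φ.l ≠ 0
  q_ne_zero : φ.q ≠ 0

theorem hom_injective_iff [Fact p.Prime] (φ : CoordChange i' j' i j) :
    Function.Injective φ.hom ↔ φ.IsNondegenerate := by
  rw [injective_iff_map_eq_one]
  constructor
  · intro h
    have eq_zero {a b c : ZMod p} (ha : φ.k * a + reduce p φ.u * b + φ.m * c = 0)
        (hb : reduce p φ.l * b + φ.n * c = 0) (hc : φ.q * c = 0) : a = 0 ∧ b = 0 ∧ c = 0 := by
      simpa [Core.one_def] using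
        h ⟨mulP p a, mulP p b, c⟩ (by rw [hom_mk_mulP, ha, hb, hc, map_zero, Core.one_def])
    have hk : (φ.k : ZMod p) ≠ 0 := fun hk =>
      one_ne_zero (eq_zero (a := 1) (b := 0) (c := 0) (by simp [hk]) (by simp) (by simp)).1
    have hl : reduce p φ.l ≠ 0 := fun hl =>
      one_ne_zero (eq_zero (a := -reduce p φ.u / φ.k) (b := 1) (c := 0)
        (by field_simp; ring) (by simp [hl]) (by simp)).2.1
    refine ⟨hk, hl, fun hq => one_ne_zero (eq_zero
      (a := (reduce p φ.u * φ.n / reduce p φ.l - φ.m) / φ.k) (b := -φ.n / reduce p φ.l) (c := 1)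
      (by field_simp; ring) (by field_simp; ring) (by simp [hq])).2.2⟩
  · rintro ⟨hk, hl, hq⟩ ⟨u, v, c⟩ h
    have hk : IsUnit (φ.k : ZMod (p ^ 2)) := isUnit_iff_reduce_ne_zero.2 (by simpa using hk)
    have hl : IsUnit φ.l := isUnit_iff_reduce_ne_zero.2 hl
    simp only [hom_apply, Core.one_def, Core.mk.injEq] at h
    obtain ⟨hu, hv, hc⟩ := h
    have hvr : reduce p v = 0 := by
      simpa [isUnit_iff_reduce_ne_zero.1 hl] using congrArg (reduce p) hv
    obtain rfl : c = 0 := by simpa [hvr, hq] using hc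
    obtain rfl : v = 0 := by simpa [hl.mul_right_eq_zero] using hv
    obtain rfl : u = 0 := by simpa [hk.mul_right_eq_zero] using hu
    rfl

theorem exists_eq_hom [Fact p.Prime] (hp2 : p ≠ 2) {f : Core i' j' →* Core i j} {k : ℕ}
    (hz : f ⟨1, 0, 0⟩ = ⟨k, 0, 0⟩) : ∃ φ : CoordChange i' j' i j, φ.k = k ∧ f = φ.hom := by
  obtain ⟨u, l, r, hb⟩ : ∃ u l r, f ⟨0, 1, 0⟩ = ⟨u, l, r⟩ := ⟨_, _, _, rfl⟩
  obtain ⟨m, n, q, hc⟩ := Core.exists_eq_mulP_of_pow_eq_one (n := f ⟨0, 0, 1⟩) (by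
    rw [← map_pow, Core.pow_prime, map_zero, map_zero]
    exact map_one f)
  obtain ⟨map_i, map_j⟩ := Core.map_structure_constants hp2 hz hb hc
  rw [map_natCast] at map_i
  refine ⟨⟨k, u, l, m, n, r, q, map_i, map_j⟩, rfl, Core.hom_ext ?_ ?_ ?_⟩
  · ext <;> simp [hz, hom_apply]
  · ext <;> simp [hb, hom_apply]
  · ext <;> simp [hc, hom_apply]

/-- The equations saying that `φ` carries the action with parameters `t'` to the one with
parameters `t`. -/
structure Intertwines (φ : CoordChange i' j' i j) (t' t : ActionParams p) : Prop where
  w : φ.q * t'.w = reduce p φ.l * t.w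
  g : reduce p φ.l * t'.g = φ.q * t.g
  f : φ.k * t'.f + t'.g * reduce p φ.u = φ.n * reduce p t.x + φ.q * t.f
  y : reduce p φ.l * t'.y + t'.w * φ.n = reduce p φ.l * t.y + φ.r * t.g
  x : φ.k * t'.x + mulP p (t'.y * reduce p φ.u + t'.w * φ.m) = φ.l * t.x + mulP p (φ.r * t.f)

theorem hom_act_sub (φ : CoordChange i' j' i j) (t' t : ActionParams p) (a : Core i' j') :
    (φ.hom (t'.act a)).u - (t.act (φ.hom a)).u =
        (φ.k * t'.x + mulP p (t'.y * reduce p φ.u + t'.w * φ.m)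
            - (φ.l * t.x + mulP p (φ.r * t.f))) * a.v
          + mulP p ((φ.k * t'.f + t'.g * reduce p φ.u
            - (φ.n * reduce p t.x + φ.q * t.f)) * a.c) ∧
      (φ.hom (t'.act a)).v - (t.act (φ.hom a)).v =
        mulP p ((reduce p φ.l * t'.y + t'.w * φ.n - (reduce p φ.l * t.y + φ.r * t.g))
          * reduce p a.v + (reduce p φ.l * t'.g - φ.q * t.g) * a.c) ∧
      (φ.hom (t'.act a)).c - (t.act (φ.hom a)).c =
        (φ.q * t'.w - reduce p φ.l * t.w) * reduce p a.v := by
  simp only [hom_apply, ActionParams.act]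
  refine ⟨?_, ?_, ?_⟩
  · simp only [map_add, map_sub, map_natCast, mul_add, add_mul, sub_mul, mul_mulP, mulP_mul]
    ring_nf
  · simp only [map_add, map_sub, map_mul, reduce_mulP, mul_add, add_mul, sub_mul, mul_mulP,
      add_zero]
    ring_nf
  · simp only [map_add, map_mul, reduce_mulP, mul_add, sub_mul]
    ring

theorem hom_act_iff [Fact p.Prime] (φ : CoordChange i' j' i j) (t' t : ActionParams p) :
    (∀ a, φ.hom (t'.act a) = t.act (φ.hom a)) ↔ φ.Intertwines t' t := by
  simp only [Core.ext_iff, ← sub_eq_zero (b := (ActionParams.act _ _).u),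
    ← sub_eq_zero (b := (ActionParams.act _ _).v), ← sub_eq_zero (b := (ActionParams.act _ _).c),
    hom_act_sub φ t' t]
  constructor
  · intro h
    obtain ⟨hx, hy, hw⟩ := by simpa [-map_add, -map_sub] using h ⟨0, 1, 0⟩
    obtain ⟨hf, hg⟩ := by simpa [-map_add, -map_sub] using h ⟨0, 0, 1⟩
    exact ⟨sub_eq_zero.1 hw, sub_eq_zero.1 hg, sub_eq_zero.1 hf, sub_eq_zero.1 hy,
      sub_eq_zero.1 hx⟩
  · rintro ⟨hw, hg, hf, hy, hx⟩ a
    simp only [hw, hg, hf, hy, hx, sub_self, zero_mul, add_zero, map_zero, and_self]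

end CoordChange

theorem orderOf_eq_of_orderOf_pow_prime_pow [hp : Fact p.Prime] {P : Type*} [Group P] {x : P}
    {m k : ℕ} (h : orderOf (x ^ p ^ m) = p ^ (k + 1)) : orderOf x = p ^ (m + k + 1) := by
  refine orderOf_eq_prime_pow ?_ ?_
  · rw [pow_add, pow_mul, ← orderOf_dvd_iff_pow_eq_one, h,
      Nat.pow_dvd_pow_iff_le_right hp.out.one_lt]
    omega
  · rw [add_assoc, pow_add, pow_mul, ← h, pow_orderOf_eq_one]

namespace Params

/-- The parameters of the action of `n₀ * gen ^ k`, for an element `n₀ = (u₀, v₀, c₀)` of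
`Core θ.i θ.j` with `s = 2 v₀` and `τ = s w - 2 c₀`, where `w` belongs to the action of
`gen ^ k`. -/
def translate (θ : Params p) (k : ℕ) (s τ : ZMod p) : ActionParams p where
  x := (θ.pow k).x + mulP p (τ * θ.i)
  f := (θ.pow k).f + s * θ.i
  y := (θ.pow k).y + τ * θ.j
  g := (θ.pow k).g + s * θ.j
  w := (θ.pow k).w

theorem conj_act_pow (θ : Params p) (k : ℕ) (n₀ n : Core θ.i θ.j) :
    n₀ * (θ.pow k).act n * n₀⁻¹ =
      (θ.translate k (2 * reduce p n₀.v)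
        (2 * reduce p n₀.v * (θ.pow k).w - 2 * n₀.c)).act n := by
  simp only [translate]
  generalize θ.pow k = t
  simp only [Core.mul_def, Core.inv_def, Core.form, ActionParams.act, map_add, map_sub, map_neg,
    reduce_mulP, mul_add, mul_sub, add_mul, sub_mul, mulP_mul, two_mul, add_zero, mul_neg]
  ext <;> ring_nf

/-- `θ'` arises from `θ` by a change of coordinates on the subgroup `Core θ.i θ.j` and of the
element acting on it. -/
def Equivalent (θ θ' : Params p) : Prop :=
  ∃ (φ : CoordChange θ'.i θ'.j θ.i θ.j) (s τ : ZMod p),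
    φ.IsNondegenerate ∧ φ.Intertwines θ'.toActionParams (θ.translate φ.k s τ)

variable [Fact p.Prime] {θ θ' : Params p} {e : ℕ} {P : Type} [Group P]

theorem Extension.conj_incl_mul_gen_pow (d : θ.Extension e P) (n₀ n : Core θ.i θ.j) (k : ℕ) :
    d.incl n₀ * d.gen ^ k * d.incl n * (d.incl n₀ * d.gen ^ k)⁻¹ =
      d.incl (n₀ * (θ.pow k).act n * n₀⁻¹) := by
  rw [mul_assoc (d.incl n₀), gen_pow_mul_incl, map_mul, map_mul, map_inv]
  group

theorem Extension.of_equivalent (hp5 : 5 ≤ p) (he : 4 ≤ e) (d : θ.Extension e P)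
    (h : θ.Equivalent θ') : Nonempty (θ'.Extension e P) := by
  obtain ⟨φ, s, τ, hφ, hact⟩ := h
  rw [← φ.hom_act_iff] at hact
  have two_ne_zero : (2 : ZMod p) ≠ 0 := Ring.two_ne_zero (by rw [ringChar.eq _ p]; omega)
  obtain ⟨v₀, hv₀⟩ := reduce_surjective (s / 2)
  let n₀ : Core θ.i θ.j := ⟨0, v₀, (s * (θ.pow φ.k).w - τ) / 2⟩
  have hconj (n) : n₀ * (θ.pow φ.k).act n * n₀⁻¹ = (θ.translate φ.k s τ).act n := by
    have hs : 2 * reduce p n₀.v = s := by simp [n₀, hv₀, mul_div_cancel₀, two_ne_zero]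
    have hτ : s * (θ.pow φ.k).w - 2 * n₀.c = τ := by simp [n₀, mul_div_cancel₀, two_ne_zero]
    rw [conj_act_pow, hs, hτ]
  have := finite d (by omega)
  have gen_pow : (d.incl n₀ * d.gen ^ φ.k) ^ p ^ (e - 2) = d.incl.comp φ.hom ⟨1, 0, 0⟩ := by
    rw [pow_prime_pow d hp5 _ _ (by omega), mul_comm, pow_mul, d.gen_pow, ← map_pow, Core.mk_pow,
      MonoidHom.comp_apply, CoordChange.hom_apply]
    simp
  have hincl : Function.Injective (d.incl.comp φ.hom) :=
    d.incl_injective.comp (φ.hom_injective_iff.2 hφ)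
  refine ⟨CyclicExtension.ofCard (d.incl.comp φ.hom) (d.incl n₀ * d.gen ^ φ.k) hincl
    (fun n => ?_) gen_pow ?_ ?_⟩
  · rw [MonoidHom.comp_apply, conj_incl_mul_gen_pow, hconj, ← hact]
    rfl
  · refine dvd_of_zpow_eq_of_orderOf_eq_mul (pow_ne_zero 2 (NeZero.ne p)) Core.pow_sq_eq_one ?_
    rw [orderOf_eq_of_orderOf_pow_prime_pow (k := 1) (by
      rw [gen_pow, orderOf_injective _ hincl, Core.orderOf_z]), add_assoc, pow_add]
  · rw [card_eq d (by omega), Core.card, ← pow_add]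
    congr 1
    omega

theorem Extension.equivalent (hp5 : 5 ≤ p) (he : 4 ≤ e) (d : θ.Extension e P)
    (d' : θ'.Extension e P) : θ.Equivalent θ' := by
  have hp2 : p ≠ 2 := by omega
  choose F hF using fun n => exists_eq_incl_of_pow_sq_eq_one d hp5 (by omega)
    (x := d'.incl n) (by rw [← map_pow, Core.pow_sq_eq_one, map_one])
  let f : Core θ'.i θ'.j →* Core θ.i θ.j := MonoidHom.mk' F fun a b =>
    d.incl_injective (by rw [map_mul, ← hF, ← hF, ← hF, map_mul])
  have hf (n) : d.incl (f n) = d'.incl n := (hF n).symm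
  have hf_inj : Function.Injective f := fun a b h =>
    d'.incl_injective (by rw [← hf, ← hf, h])
  obtain ⟨n₀, k, hgen⟩ := exists_eq d d'.gen
  have hz : f ⟨1, 0, 0⟩ = ⟨k, 0, 0⟩ := d.incl_injective (by
    rw [hf, ← d'.gen_pow, hgen, pow_prime_pow d hp5 _ _ (by omega), mul_comm, pow_mul, d.gen_pow,
      ← map_pow, Core.mk_pow, mul_one, mul_zero, mul_zero])
  obtain ⟨φ, rfl, hφ⟩ := CoordChange.exists_eq_hom hp2 hz
  refine ⟨φ, 2 * reduce p n₀.v, 2 * reduce p n₀.v * (θ.pow φ.k).w - 2 * n₀.c, ?_, ?_⟩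
  · rwa [← φ.hom_injective_iff, ← hφ]
  · rw [← φ.hom_act_iff, ← hφ]
    intro n
    refine d.incl_injective ?_
    rw [← conj_act_pow, ← conj_incl_mul_gen_pow, ← hgen, hf, hf, d'.conj_incl]
    rfl

end Params

end CoordChange

section ParamVectors

/-- Values of the parameters `i, j, x, f, y, g, w` in the prime field. -/
structure ParamVector (p : ℕ) where
  i : ZMod p
  j : ZMod p
  x : ZMod p
  f : ZMod p
  y : ZMod p
  g : ZMod p
  w : ZMod p

variable {p : ℕ} [Fact p.Prime]

/-- The polynomial `k (k - 1) / 2` over the prime field. -/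
def chooseTwo (k : ZMod p) : ZMod p := k * (k - 1) / 2

/-- The equations of `CoordChange` and `CoordChange.Intertwines` for parameters `v` and `v'` whose
entries `x` are `mulP p v.x` and `mulP p v'.x`; the entries `u` and `l` of the coordinate change
only matter modulo `p`. -/
structure NonunitRel (v v' : ParamVector p) (k s τ r m n q u l : ZMod p) : Prop where
  k_ne_zero : k ≠ 0
  q_ne_zero : q ≠ 0
  l_ne_zero : l ≠ 0
  j : v'.j = q * v.j
  i : k * v'.i + v'.j * u = l * q * v.i
  w : q * v'.w = l * k * v.w
  g : l * v'.g = q * (k * v.g + s * v.j)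
  f : k * v'.f + v'.g * u = q * (k * v.f + s * v.i)
  y : l * v'.y + v'.w * n =
    l * (k * v.y + chooseTwo k * (v.w * v.g) + τ * v.j) + r * (k * v.g + s * v.j)
  x : k * v'.x + v'.y * u + v'.w * m =
    l * (k * v.x + chooseTwo k * (v.w * v.f) + τ * v.i) + r * (k * v.f + s * v.i)

/-- The equations of `CoordChange` and `CoordChange.Intertwines` for parameters `v` and `v'` with
`j = 0` and `x = 1`; the equation for `x` determines the entry `l` of the coordinate change, which
is `1` modulo `p`. -/
structure UnitRel (v v' : ParamVector p) (k s r n q u : ZMod p) : Prop where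
  k_ne_zero : k ≠ 0
  q_ne_zero : q ≠ 0
  i : k * v'.i = q * v.i
  w : q * v'.w = k * v.w
  g : v'.g = q * (k * v.g)
  f : k * v'.f + v'.g * u = n * k + q * (k * v.f + chooseTwo k * v.g + s * v.i)
  y : v'.y + v'.w * n = k * v.y + chooseTwo k * (v.w * v.g) + r * (k * v.g)

namespace Params

/-- The parameters `v` with `x` read as the multiple `mulP p v.x` of `p`. -/
def ofNonunit (v : ParamVector p) : Params p where
  i := v.i
  j := v.j
  x := mulP p v.x
  f := v.f
  y := v.y
  g := v.g
  w := v.w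
  reduce_x_mul_j := by simp

/-- The parameters `v` with `j` and `x` replaced by `0` and `1`. -/
def ofUnit (v : ParamVector p) : Params p where
  i := v.i
  j := 0
  x := 1
  f := v.f
  y := v.y
  g := v.g
  w := v.w
  reduce_x_mul_j := by simp

variable {v v' : ParamVector p} {θ θ' θ'' : Params p}

theorem chooseTwo_natCast (hp2 : p ≠ 2) (k : ℕ) : chooseTwo (k : ZMod p) = k.choose 2 := by
  have two_ne_zero : (2 : ZMod p) ≠ 0 := Ring.two_ne_zero (by rwa [ringChar.eq _ p])
  have h : (k.choose 2 : ZMod p) * 2 = k * (k - 1) := by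
    rcases k with _ | k
    · simp
    · simpa using congrArg (Nat.cast : ℕ → ZMod p) (Nat.add_one_mul_choose_eq k 1).symm
  rw [chooseTwo, ← h, mul_div_cancel_right₀ _ two_ne_zero]

theorem translate_one (θ : Params p) : θ.translate 1 0 0 = θ.toActionParams := by
  simp [translate, ActionParams.pow, Nat.choose_eq_zero_of_lt]

theorem Equivalent.trans (hp5 : 5 ≤ p) (h : θ.Equivalent θ') (h' : θ'.Equivalent θ'') :
    θ.Equivalent θ'' := by
  obtain ⟨P, _, ⟨d⟩⟩ := exists_extension hp5 θ (e := 4) le_rfl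
  obtain ⟨d'⟩ := Extension.of_equivalent hp5 le_rfl d h
  obtain ⟨d''⟩ := Extension.of_equivalent hp5 le_rfl d' h'
  exact Extension.equivalent hp5 le_rfl d d''

@[simp]
theorem reduce_translate_x (θ : Params p) (k : ℕ) (s τ : ZMod p) :
    reduce p (θ.translate k s τ).x = k * reduce p θ.x := by
  simp [translate]

theorem reduce_x_eq_of_intertwines {φ : CoordChange θ'.i θ'.j θ.i θ.j} {s τ : ZMod p}
    (h : φ.Intertwines θ'.toActionParams (θ.translate φ.k s τ)) (hk : (φ.k : ZMod p) ≠ 0) :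
    reduce p θ'.x = reduce p φ.l * reduce p θ.x := by
  have hx := congrArg (reduce p) h.x
  simp only [map_add (reduce p), map_mul, map_natCast, reduce_mulP, add_zero,
    reduce_translate_x] at hx
  exact mul_left_cancel₀ hk (by linear_combination hx)

theorem Equivalent.reduce_x_eq_zero_iff (h : θ.Equivalent θ') :
    reduce p θ.x = 0 ↔ reduce p θ'.x = 0 := by
  obtain ⟨φ, s, τ, hφ, hact⟩ := h
  simp [reduce_x_eq_of_intertwines hact hφ.k_ne_zero, hφ.reduce_l_ne_zero]

theorem ofNonunit_equivalent_iff (hp2 : p ≠ 2) : (ofNonunit v).Equivalent (ofNonunit v') ↔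
    ∃ k s τ r m n q u l, NonunitRel v v' k s τ r m n q u l := by
  constructor
  · rintro ⟨φ, s, τ, ⟨hk, hl, hq⟩, hact⟩
    refine ⟨φ.k, s, τ, φ.r, φ.m, φ.n, φ.q, reduce p φ.u, reduce p φ.l, hk, hq, hl,
      mul_left_cancel₀ hl (φ.map_j.trans (mul_assoc _ _ _)), φ.map_i, ?_, ?_, ?_, ?_, ?_⟩
    · simpa [ofNonunit, translate, ActionParams.pow, mul_assoc] using hact.w
    · simpa [ofNonunit, translate, ActionParams.pow] using hact.g
    · simpa [ofNonunit, translate, ActionParams.pow] using hact.f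
    · simpa [ofNonunit, translate, ActionParams.pow, chooseTwo_natCast hp2] using hact.y
    · have hx := hact.x
      simp only [ofNonunit, translate, ActionParams.pow, reduce_mulP, mul_zero, zero_add,
        add_zero, mul_mulP, map_natCast, ← map_add] at hx
      rw [chooseTwo_natCast hp2]
      linear_combination mulP_injective hx
  · rintro ⟨k, s, τ, r, m, n, q, u, l, hk, hq, hl, hj, hi, hw, hg, hf, hy, hx⟩
    obtain ⟨k, rfl⟩ := ZMod.natCast_zmod_surjective k
    obtain ⟨u, rfl⟩ := reduce_surjective u
    obtain ⟨l, rfl⟩ := reduce_surjective l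
    rw [chooseTwo_natCast hp2] at hx hy
    refine ⟨⟨k, u, l, m, n, r, q, hi, ?_⟩, s, τ, ⟨hk, hl, hq⟩, ?_, ?_, ?_, ?_, ?_⟩
    · simp [ofNonunit, hj, mul_assoc]
    all_goals simp only [ofNonunit, translate, ActionParams.pow, reduce_mulP, mul_zero, zero_add,
        add_zero, mul_mulP, map_natCast, ← map_add]
    · linear_combination hw
    · exact hg
    · exact hf
    · exact hy
    · congr 1
      linear_combination hx

theorem ofUnit_equivalent_iff (hp2 : p ≠ 2) : (ofUnit v).Equivalent (ofUnit v') ↔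
    ∃ k s r n q u, UnitRel v v' k s r n q u := by
  constructor
  · rintro ⟨φ, s, τ, ⟨hk, -, hq⟩, hact⟩
    have hl : reduce p φ.l = 1 := by
      simpa [ofUnit] using (reduce_x_eq_of_intertwines hact hk).symm
    refine ⟨φ.k, s, φ.r, φ.n, φ.q, reduce p φ.u, hk, hq, ?_, ?_, ?_, ?_, ?_⟩
    · simpa [ofUnit, hl] using φ.map_i
    · simpa [ofUnit, translate, ActionParams.pow, hl] using hact.w
    · simpa [ofUnit, translate, ActionParams.pow, hl] using hact.g
    · simpa [ofUnit, translate, ActionParams.pow, chooseTwo_natCast hp2] using hact.f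
    · simpa [ofUnit, translate, ActionParams.pow, chooseTwo_natCast hp2, hl] using hact.y
  · rintro ⟨k, s, r, n, q, u, hk, hq, hi, hw, hg, hf, hy⟩
    obtain ⟨k, rfl⟩ := ZMod.natCast_zmod_surjective k
    obtain ⟨u, rfl⟩ := reduce_surjective u
    rw [chooseTwo_natCast hp2] at hf hy
    set t := (ofUnit v).translate k s 0 with ht
    have htx : reduce p t.x = k := by simp [ht, ofUnit]
    obtain ⟨l, hlx⟩ := (isUnit_iff_reduce_ne_zero.2 (htx.symm ▸ hk)).dvd
      (a := k + mulP p (v'.y * reduce p u) - mulP p (r * t.f))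
    have hl : reduce p l = 1 := by
      have h := congrArg (reduce p) hlx
      simp only [map_sub (reduce p), map_add (reduce p), map_mul, map_natCast, reduce_mulP, htx,
        add_zero, sub_zero] at h
      exact mul_left_cancel₀ hk (by rw [← h, mul_one])
    refine ⟨⟨k, u, l, 0, n, r, q, ?_, ?_⟩, s, 0, ⟨hk, hl ▸ one_ne_zero, hq⟩, ?_, ?_, ?_, ?_, ?_⟩
    · simpa [ofUnit, hl] using hi
    · simp [ofUnit]
    · simpa [ofUnit, translate, ActionParams.pow, hl] using hw
    · simpa [ofUnit, translate, ActionParams.pow, hl] using hg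
    · simpa [ofUnit, translate, ActionParams.pow] using hf
    · simpa [ofUnit, translate, ActionParams.pow, hl] using hy
    · rw [mul_comm l, ← hlx]
      simp [ofUnit, ht]

theorem exists_eq_ofNonunit (hx : reduce p θ.x = 0) : ∃ v, θ = ofNonunit v := by
  obtain ⟨⟨x, f, y, g, w⟩, i, j⟩ := θ
  obtain ⟨x, rfl⟩ : ∃ x', x = mulP p x' := reduce_eq_zero_iff.1 hx
  exact ⟨⟨i, j, x, f, y, g, w⟩, rfl⟩

theorem exists_equivalent_ofUnit (hx : reduce p θ.x ≠ 0) : ∃ v, θ.Equivalent (ofUnit v) := by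
  have hj : θ.j = 0 := (mul_eq_zero.1 θ.reduce_x_mul_j).resolve_left hx
  obtain ⟨l, hl⟩ := (isUnit_iff_reduce_ne_zero.2 hx).exists_left_inv
  have hlx : reduce p l * reduce p θ.x = 1 := by rw [← map_mul, hl, map_one]
  have hl0 : reduce p l ≠ 0 := left_ne_zero_of_mul_eq_one hlx
  refine ⟨⟨reduce p l * θ.i, 0, 0, θ.f, θ.y, θ.g / reduce p l, reduce p l * θ.w⟩,
    ⟨1, 0, l, 0, 0, 0, 1, by simp [ofUnit], by simp [ofUnit, hj]⟩, 0, 0,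
    ⟨by simp, hl0, by simp⟩, ?_⟩
  constructor <;> simp [ofUnit, translate_one, hl, mul_div_cancel₀, hl0]

end Params

end ParamVectors

section OrbitRepresentatives

variable {F : Type*} [Field F] {b b' : Bool} {z ν : F}

/-- Representatives of the orbits of `Fˣ` on `F`. -/
def zeroOrOne (b : Bool) : F := if b then 1 else 0

/-- Representatives of the orbits of the squares of `Fˣ` on `Fˣ`, for a nonsquare `ν`. -/
def oneOr (ν : F) (b : Bool) : F := if b then ν else 1

theorem eq_of_zeroOrOne_eq_mul (hz : z ≠ 0) (h : zeroOrOne b' = z * zeroOrOne b) : b = b' := by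
  cases b <;> cases b' <;> simp_all [zeroOrOne]

theorem exists_mul_eq_zeroOrOne (a : F) : ∃ b, ∃ z : F, z ≠ 0 ∧ z * a = zeroOrOne b := by
  by_cases ha : a = 0
  · exact ⟨false, 1, one_ne_zero, by simp [ha, zeroOrOne]⟩
  · exact ⟨true, a⁻¹, inv_ne_zero ha, by simp [ha, zeroOrOne]⟩

theorem oneOr_ne_zero (hν : ¬IsSquare ν) (b : Bool) : oneOr ν b ≠ 0 := by
  have : ν ≠ 0 := by
    rintro rfl
    exact hν .zero
  cases b <;> simp [oneOr, this]

theorem eq_of_oneOr_eq_mul (hν : ¬IsSquare ν) (h : oneOr ν b' = z * z * oneOr ν b) : b = b' := by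
  cases b <;> cases b'
  · rfl
  · exact absurd ⟨z, by simpa [oneOr] using h⟩ hν
  · have hνz : ν = z⁻¹ * z⁻¹ := by
      rw [← mul_inv]
      exact eq_inv_of_mul_eq_one_right (by simpa [oneOr] using h.symm)
    exact absurd ⟨z⁻¹, hνz⟩ hν
  · rfl

theorem exists_mul_eq_oneOr [Finite F] (hν : ¬IsSquare ν) {a : F} (ha : a ≠ 0) :
    ∃ b, ∃ z : F, z ≠ 0 ∧ z * z * a = oneOr ν b := by
  classical
  cases nonempty_fintype F
  by_cases hsq : IsSquare a
  · obtain ⟨c, rfl⟩ := hsq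
    have hc : c ≠ 0 := left_ne_zero_of_mul ha
    exact ⟨false, c⁻¹, inv_ne_zero hc, by simp [oneOr, field]⟩
  · have hνa : ν * a ≠ 0 := mul_ne_zero (oneOr_ne_zero hν true) ha
    obtain ⟨c, hc⟩ : IsSquare (ν * a) := by
      rw [← quadraticChar_one_iff_isSquare hνa, map_mul,
        quadraticChar_neg_one_iff_not_isSquare.2 hν, quadraticChar_neg_one_iff_not_isSquare.2 hsq,
        neg_one_mul, neg_neg]
    have hc0 : c ≠ 0 := left_ne_zero_of_mul (hc ▸ hνa)
    refine ⟨true, c / a, div_ne_zero hc0 ha, ?_⟩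
    rw [div_mul_div_comm, ← hc, oneOr, if_pos rfl]
    field_simp

theorem eq_zero_iff_of_mul_eq_mul {a b x x' : F} (ha : a ≠ 0) (hb : b ≠ 0) (h : a * x' = b * x) :
    x = 0 ↔ x' = 0 := by
  rw [← mul_eq_zero_iff_left hb, ← h, mul_eq_zero_iff_left ha]

end OrbitRepresentatives

section UnitNormalForms

variable {p : ℕ} {ν : ZMod p}

/-- Index set of the normal forms with `x = 1`. The constructors are named after those of the
parameters `w, i, g` which do not vanish. -/
inductive XOneIndex (p : ℕ)
  | wig (i : (ZMod p)ˣ) (g : Bool)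
  | wi (i : (ZMod p)ˣ)
  | wg (g : Bool)
  | w (f : Bool)
  | ig (g : Bool)
  | i (y : Bool)
  | g
  | zero (y : Bool)

variable [Fact p.Prime]

/-- The normal forms with `x = 1`, for a nonsquare `ν`. -/
def xOneNormalForm (ν : ZMod p) : XOneIndex p → ParamVector p
  | .wig i g => ⟨i, 0, 0, 0, 0, oneOr ν g, 1⟩
  | .wi i => ⟨i, 0, 0, 0, 0, 0, 1⟩
  | .wg g => ⟨0, 0, 0, 0, 0, oneOr ν g, 1⟩
  | .w f => ⟨0, 0, 0, zeroOrOne f, 0, 0, 1⟩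
  | .ig g => ⟨1, 0, 0, 0, 0, oneOr ν g, 0⟩
  | .i y => ⟨1, 0, 0, 0, zeroOrOne y, 0, 0⟩
  | .g => ⟨0, 0, 0, 0, 0, 1, 0⟩
  | .zero y => ⟨0, 0, 0, 0, zeroOrOne y, 0, 0⟩

variable {v v' : ParamVector p} {k s r n q u : ZMod p}

theorem UnitRel.eq_zero_iff (h : UnitRel v v' k s r n q u) :
    (v.w = 0 ↔ v'.w = 0) ∧ (v.i = 0 ↔ v'.i = 0) ∧ (v.g = 0 ↔ v'.g = 0) := by
  refine ⟨eq_zero_iff_of_mul_eq_mul h.q_ne_zero h.k_ne_zero h.w,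
    eq_zero_iff_of_mul_eq_mul h.k_ne_zero h.q_ne_zero h.i, ?_⟩
  rw [h.g, mul_eq_zero_iff_left h.q_ne_zero, mul_eq_zero_iff_left h.k_ne_zero]

theorem UnitRel.eq_of_xOneNormalForm (hν : ¬IsSquare ν) {t t' : XOneIndex p}
    (h : UnitRel (xOneNormalForm ν t) (xOneNormalForm ν t') k s r n q u) : t = t' := by
  obtain ⟨hw, hi, hg⟩ := h.eq_zero_iff
  obtain ⟨hk, hq, i, w, g, f, y⟩ := h
  cases t <;> cases t' <;>
    simp only [xOneNormalForm, oneOr_ne_zero hν, Units.ne_zero, one_ne_zero, iff_self, iff_true,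
      iff_false, not_true, one_mul, mul_one, mul_zero, zero_mul, add_zero, zero_add]
      at hw hi hg i w g f y
  case wig.wig =>
    subst w
    rw [eq_of_oneOr_eq_mul hν (g.trans (mul_assoc _ _ _).symm), Units.ext (mul_left_cancel₀ hq i)]
  case wi.wi =>
    subst w
    rw [Units.ext (mul_left_cancel₀ hq i)]
  case wg.wg =>
    subst w
    rw [eq_of_oneOr_eq_mul hν (g.trans (mul_assoc _ _ _).symm)]
  case w.w =>
    subst w
    rw [y, zero_mul, zero_add] at f
    rw [eq_of_zeroOrOne_eq_mul hq (mul_left_cancel₀ hq f)]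
  case ig.ig =>
    subst i
    rw [eq_of_oneOr_eq_mul hν (g.trans (mul_assoc _ _ _).symm)]
  case i.i => rw [eq_of_zeroOrOne_eq_mul hk y]
  case g.g => rfl
  case zero.zero => rw [eq_of_zeroOrOne_eq_mul hk y]

theorem exists_unitRel_xOneNormalForm_of_w_ne_zero (hν : ¬IsSquare ν) (hw : v.w ≠ 0) :
    ∃ t k s r n q u, UnitRel v (xOneNormalForm ν t) k s r n q u := by
  obtain ⟨i, j, x, f, y, g, w⟩ := v
  by_cases hg : g = 0 <;> by_cases hi : i = 0
  · obtain ⟨b, z, hz, hb⟩ := exists_mul_eq_zeroOrOne (y + w * f)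
    refine ⟨.w b, z, 0, 0, z * y, z * w, 0, hz, mul_ne_zero hz hw, ?_, ?_, ?_, ?_, ?_⟩ <;>
      simp only [xOneNormalForm, hi, hg]
    case refine_4 => linear_combination -z * hb
    all_goals ring
  · refine ⟨.wi (.mk0 _ (mul_ne_zero hw hi)), 1, -(y + w * f) / (w * i), 0, y, w, 0, one_ne_zero,
      hw, ?_, ?_, ?_, ?_, ?_⟩ <;>
      simp only [xOneNormalForm, hg, Units.val_mk0]
    all_goals field_simp
    all_goals ring
  · obtain ⟨b, z, hz, hb⟩ := exists_mul_eq_oneOr hν (mul_ne_zero hw hg)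
    have hb0 := oneOr_ne_zero hν b
    refine ⟨.wg b, z, 0, -(z * y + chooseTwo z * (w * g)) / (z * g), 0, z * w,
      z * w * (z * f + chooseTwo z * g) / oneOr ν b, hz, mul_ne_zero hz hw, ?_, ?_, ?_, ?_, ?_⟩ <;>
      simp only [xOneNormalForm, hi]
    case refine_3 => linear_combination -hb
    all_goals try field_simp
    all_goals ring
  · obtain ⟨b, z, hz, hb⟩ := exists_mul_eq_oneOr hν (mul_ne_zero hw hg)
    refine ⟨.wig (.mk0 _ (mul_ne_zero hw hi)) b, z,
      -(z * y + chooseTwo z * (w * g) + w * (z * f + chooseTwo z * g)) / (w * i), 0,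
      z * y + chooseTwo z * (w * g), z * w, 0, hz, mul_ne_zero hz hw, ?_, ?_, ?_, ?_, ?_⟩ <;>
      simp only [xOneNormalForm, Units.val_mk0]
    case refine_3 => linear_combination -hb
    all_goals try field_simp
    all_goals ring

theorem exists_unitRel_xOneNormalForm_of_w_eq_zero (hν : ¬IsSquare ν) (hw : v.w = 0) :
    ∃ t k s r n q u, UnitRel v (xOneNormalForm ν t) k s r n q u := by
  obtain ⟨i, j, x, f, y, g, w⟩ := v
  obtain rfl : w = 0 := hw
  by_cases hg : g = 0 <;> by_cases hi : i = 0
  · obtain ⟨b, z, hz, hb⟩ := exists_mul_eq_zeroOrOne y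
    refine ⟨.zero b, z, 0, 0, -f, 1, 0, hz, one_ne_zero, ?_, ?_, ?_, ?_, ?_⟩ <;>
      simp only [xOneNormalForm, hi, hg]
    case refine_5 => linear_combination -hb
    all_goals ring
  · obtain ⟨b, z, hz, hb⟩ := exists_mul_eq_zeroOrOne y
    refine ⟨.i b, z, -(z * f) / i, 0, 0, z / i, 0, hz, div_ne_zero hz hi, ?_, ?_, ?_, ?_, ?_⟩ <;>
      simp only [xOneNormalForm, hg]
    case refine_5 => linear_combination -hb
    all_goals try field_simp
    all_goals ring
  · refine ⟨.g, 1, 0, -y / g, -(f + chooseTwo 1 * g) / g, g⁻¹, 0, one_ne_zero, inv_ne_zero hg,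
      ?_, ?_, ?_, ?_, ?_⟩ <;>
      simp only [xOneNormalForm, hi]
    all_goals try field_simp
    all_goals ring
  · obtain ⟨b, z, hz, hb⟩ := exists_mul_eq_oneOr hν (mul_ne_zero hi hg)
    refine ⟨.ig b, z * i, -(z * i * f + chooseTwo (z * i) * g) / i, -y / g, 0, z, 0,
      mul_ne_zero hz hi, hz, ?_, ?_, ?_, ?_, ?_⟩ <;>
      simp only [xOneNormalForm]
    case refine_3 => linear_combination -hb
    all_goals try field_simp
    all_goals ring

theorem exists_unitRel_xOneNormalForm (hν : ¬IsSquare ν) (v : ParamVector p) :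
    ∃ t k s r n q u, UnitRel v (xOneNormalForm ν t) k s r n q u := by
  by_cases hw : v.w = 0
  · exact exists_unitRel_xOneNormalForm_of_w_eq_zero hν hw
  · exact exists_unitRel_xOneNormalForm_of_w_ne_zero hν hw

end UnitNormalForms

section NonunitNormalForms

variable {p : ℕ} {ν : ZMod p}

/-- Index set of the normal forms with `x` divisible by `p` and `j = 1`. The constructors are named
after the first of `w`, the discriminant `f j - g i` and `x` that can be nonzero. -/
inductive JOneIndex (p : ℕ)
  | w (f : ZMod p)
  | f (f : (ZMod p)ˣ)
  | x (x : Bool)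

/-- Index set of the normal forms with `x` divisible by `p` and `j = 0`. The constructors are named
after those of the parameters `w, i, g` which do not vanish or, if there are none, after the first
of `f`, `y` and `x` that can be nonzero. -/
inductive JZeroIndex
  | wig (i g : Bool)
  | wi (i : Bool)
  | wg (g : Bool)
  | w (f : Bool)
  | ig (g : Bool)
  | i (y : Bool)
  | g (x : Bool)
  | f (y : Bool)
  | y
  | x (x : Bool)

variable [Fact p.Prime]

/-- The normal forms with `x` divisible by `p` and `j = 1`. -/
def jOneNormalForm : JOneIndex p → ParamVector p
  | .w f => ⟨0, 1, 0, f, 0, 0, 1⟩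
  | .f f => ⟨0, 1, 0, f, 0, 0, 0⟩
  | .x x => ⟨0, 1, zeroOrOne x, 0, 0, 0, 0⟩

/-- The normal forms with `x` divisible by `p` and `j = 0`, for a nonsquare `ν`. -/
def jZeroNormalForm (ν : ZMod p) : JZeroIndex → ParamVector p
  | .wig i g => ⟨oneOr ν i, 0, 0, 0, 0, oneOr ν g, 1⟩
  | .wi i => ⟨oneOr ν i, 0, 0, 0, 0, 0, 1⟩
  | .wg g => ⟨0, 0, 0, 0, 0, oneOr ν g, 1⟩
  | .w f => ⟨0, 0, 0, zeroOrOne f, 0, 0, 1⟩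
  | .ig g => ⟨1, 0, 0, 0, 0, oneOr ν g, 0⟩
  | .i y => ⟨1, 0, 0, 0, zeroOrOne y, 0, 0⟩
  | .g x => ⟨0, 0, zeroOrOne x, 0, 0, 1, 0⟩
  | .f y => ⟨0, 0, 0, 1, zeroOrOne y, 0, 0⟩
  | .y => ⟨0, 0, 0, 0, 1, 0, 0⟩
  | .x x => ⟨0, 0, zeroOrOne x, 0, 0, 0, 0⟩

variable {v v' : ParamVector p} {k s τ r m n q u l : ZMod p}

theorem NonunitRel.j_eq_zero_iff (h : NonunitRel v v' k s τ r m n q u l) :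
    v.j = 0 ↔ v'.j = 0 := by
  rw [h.j, mul_eq_zero_iff_left h.q_ne_zero]

theorem NonunitRel.w_eq_zero_iff (h : NonunitRel v v' k s τ r m n q u l) :
    v.w = 0 ↔ v'.w = 0 :=
  eq_zero_iff_of_mul_eq_mul h.q_ne_zero (mul_ne_zero h.l_ne_zero h.k_ne_zero) h.w

theorem NonunitRel.discr_eq_zero_iff (h : NonunitRel v v' k s τ r m n q u l) :
    v.f * v.j - v.g * v.i = 0 ↔ v'.f * v'.j - v'.g * v'.i = 0 := by
  have hkl := mul_ne_zero h.k_ne_zero h.l_ne_zero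
  have hqq := mul_ne_zero h.q_ne_zero h.q_ne_zero
  refine eq_zero_iff_of_mul_eq_mul hkl (mul_ne_zero hqq hkl) ?_
  linear_combination l * v'.j * h.f - l * v'.g * h.i + q * (k * v.f + s * v.i) * l * h.j -
    q * v.i * l * h.g

theorem NonunitRel.i_eq_zero_iff (h : NonunitRel v v' k s τ r m n q u l) (hj : v.j = 0) :
    v.i = 0 ↔ v'.i = 0 :=
  eq_zero_iff_of_mul_eq_mul h.k_ne_zero (mul_ne_zero h.l_ne_zero h.q_ne_zero) (by
    linear_combination h.i - u * h.j - u * q * hj)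

theorem NonunitRel.g_eq_zero_iff (h : NonunitRel v v' k s τ r m n q u l) (hj : v.j = 0) :
    v.g = 0 ↔ v'.g = 0 :=
  eq_zero_iff_of_mul_eq_mul h.l_ne_zero (mul_ne_zero h.q_ne_zero h.k_ne_zero) (by
    linear_combination h.g + q * s * hj)

theorem NonunitRel.f_eq_zero_iff (h : NonunitRel v v' k s τ r m n q u l) (hj : v.j = 0)
    (hi : v.i = 0) (hg : v.g = 0) : v.f = 0 ↔ v'.f = 0 :=
  eq_zero_iff_of_mul_eq_mul h.k_ne_zero (mul_ne_zero h.q_ne_zero h.k_ne_zero) (by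
    linear_combination h.f + q * s * hi - u * (h.g_eq_zero_iff hj).1 hg)

theorem NonunitRel.y_eq_zero_iff (h : NonunitRel v v' k s τ r m n q u l) (hj : v.j = 0)
    (hg : v.g = 0) (hw : v.w = 0) : v.y = 0 ↔ v'.y = 0 :=
  eq_zero_iff_of_mul_eq_mul h.l_ne_zero (mul_ne_zero h.l_ne_zero h.k_ne_zero) (by
    linear_combination h.y + (l * τ + r * s) * hj + r * k * hg + l * chooseTwo k * v.g * hw -
      n * h.w_eq_zero_iff.1 hw)

theorem NonunitRel.eq_of_jOneNormalForm {t t' : JOneIndex p}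
    (h : NonunitRel (jOneNormalForm t) (jOneNormalForm t') k s τ r m n q u l) : t = t' := by
  have hw := h.w_eq_zero_iff
  have hd := h.discr_eq_zero_iff
  obtain ⟨hk, hq, hl, j, i, w, g, f, y, x⟩ := h
  cases t <;> cases t' <;>
    simp only [jOneNormalForm, Units.ne_zero, one_ne_zero, iff_self, iff_true, iff_false, sub_zero,
      not_true, one_mul, mul_one, mul_zero, zero_mul, add_zero, zero_add] at hw hd i j w g f y x
  all_goals subst j
  case w.w => rw [mul_left_cancel₀ hk (f.trans (one_mul _))]
  case f.f => rw [Units.ext (mul_left_cancel₀ hk (f.trans (one_mul _)))]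
  case x.x =>
    exact congrArg _ (eq_of_zeroOrOne_eq_mul hl (mul_left_cancel₀ hk (by linear_combination x)))

theorem NonunitRel.eq_of_jZeroNormalForm (hν : ¬IsSquare ν) {t t' : JZeroIndex}
    (h : NonunitRel (jZeroNormalForm ν t) (jZeroNormalForm ν t') k s τ r m n q u l) : t = t' := by
  have hw := h.w_eq_zero_iff
  have hi := h.i_eq_zero_iff
  have hg := h.g_eq_zero_iff
  have hf := h.f_eq_zero_iff
  have hy := h.y_eq_zero_iff
  obtain ⟨hk, hq, hl, -, i, w, g, f, y, x⟩ := h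
  cases t <;> cases t' <;>
    simp only [jZeroNormalForm, oneOr_ne_zero hν, one_ne_zero, iff_self, iff_true, iff_false,
      not_true, one_mul, mul_one, mul_zero, zero_mul, add_zero, zero_add, forall_const,
      false_imp_iff] at hw hi hg hf hy i w g f y x
  case wig.wig =>
    subst w
    exact congrArg₂ _
      (eq_of_oneOr_eq_mul hν (z := l) (mul_left_cancel₀ hk (by linear_combination i)))
      (eq_of_oneOr_eq_mul hν (z := k) (mul_left_cancel₀ hl (by linear_combination g)))
  case wi.wi =>
    subst w
    exact congrArg _
      (eq_of_oneOr_eq_mul hν (z := l) (mul_left_cancel₀ hk (by linear_combination i)))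
  case wg.wg =>
    subst w
    exact congrArg _
      (eq_of_oneOr_eq_mul hν (z := k) (mul_left_cancel₀ hl (by linear_combination g)))
  case w.w =>
    exact congrArg _ (eq_of_zeroOrOne_eq_mul hq (mul_left_cancel₀ hk (by linear_combination f)))
  case ig.ig =>
    subst i
    exact congrArg _
      (eq_of_oneOr_eq_mul hν (z := q) (mul_left_cancel₀ hl (by linear_combination g)))
  case i.i =>
    exact congrArg _ (eq_of_zeroOrOne_eq_mul hk (mul_left_cancel₀ hl (by linear_combination y)))
  case g.g =>
    exact congrArg _ (eq_of_zeroOrOne_eq_mul hl (mul_left_cancel₀ hk (by linear_combination x)))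
  case f.f =>
    exact congrArg _ (eq_of_zeroOrOne_eq_mul hk (mul_left_cancel₀ hl (by linear_combination y)))
  case y.y => rfl
  case x.x =>
    exact congrArg _ (eq_of_zeroOrOne_eq_mul hl (mul_left_cancel₀ hk (by linear_combination x)))

theorem exists_nonunitRel_jOneNormalForm_of_w_ne_zero (hj : v.j ≠ 0) (hw : v.w ≠ 0) :
    ∃ t k s τ r m n q u l, NonunitRel v (jOneNormalForm t) k s τ r m n q u l := by
  obtain ⟨i, j, x, f, y, g, w⟩ := v
  refine ⟨.w (j⁻¹ * (f - g * i / j)), 1, -g / j, 0, 0, j⁻¹ / w * (x + chooseTwo 1 * (w * f)),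
    j⁻¹ / w * (y + chooseTwo 1 * (w * g)), j⁻¹, j⁻¹ / w * j⁻¹ * i, j⁻¹ / w, one_ne_zero,
    inv_ne_zero hj, div_ne_zero (inv_ne_zero hj) hw, ?_, ?_, ?_, ?_, ?_, ?_, ?_⟩ <;>
    simp only [jOneNormalForm]
  all_goals try field_simp
  all_goals ring

theorem exists_nonunitRel_jOneNormalForm_of_w_eq_zero (hj : v.j ≠ 0) (hw : v.w = 0) :
    ∃ t k s τ r m n q u l, NonunitRel v (jOneNormalForm t) k s τ r m n q u l := by
  obtain ⟨i, j, x, f, y, g, w⟩ := v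
  dsimp only at hj hw
  by_cases hd : f - g * i / j = 0
  · obtain ⟨b, z, hz, hb⟩ := exists_mul_eq_zeroOrOne (x - y * i / j)
    refine ⟨.x b, 1, -g / j, -y / j, 0, 0, 0, j⁻¹, z * j⁻¹ * i, z, one_ne_zero, inv_ne_zero hj, hz,
      ?_, ?_, ?_, ?_, ?_, ?_, ?_⟩ <;>
      simp only [jOneNormalForm, hw]
    case refine_5 => linear_combination -j⁻¹ * hd
    case refine_7 => linear_combination -hb
    all_goals try field_simp
    all_goals ring
  · refine ⟨.f (.mk0 _ (mul_ne_zero (inv_ne_zero hj) hd)), 1, -g / j, -y / j,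
      -(x - y * i / j) / (f - g * i / j), 0, 0, j⁻¹, j⁻¹ * i, 1, one_ne_zero, inv_ne_zero hj,
      one_ne_zero, ?_, ?_, ?_, ?_, ?_, ?_, ?_⟩ <;>
      simp only [jOneNormalForm, hw, Units.val_mk0]
    case refine_7 => linear_combination -div_mul_cancel₀ (-(x - y * i / j)) hd
    all_goals try field_simp
    all_goals ring

theorem exists_nonunitRel_jOneNormalForm (hj : v.j ≠ 0) :
    ∃ t k s τ r m n q u l, NonunitRel v (jOneNormalForm t) k s τ r m n q u l := by
  by_cases hw : v.w = 0
  · exact exists_nonunitRel_jOneNormalForm_of_w_eq_zero hj hw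
  · exact exists_nonunitRel_jOneNormalForm_of_w_ne_zero hj hw

theorem exists_nonunitRel_jZeroNormalForm_of_w_ne_zero (hν : ¬IsSquare ν) (hj : v.j = 0)
    (hw : v.w ≠ 0) :
    ∃ t k s τ r m n q u l, NonunitRel v (jZeroNormalForm ν t) k s τ r m n q u l := by
  obtain ⟨i, j, x, f, y, g, w⟩ := v
  dsimp only at hj hw
  by_cases hg : g = 0 <;> by_cases hi : i = 0
  · obtain ⟨b, z, hz, hb⟩ := exists_mul_eq_zeroOrOne f
    refine ⟨.w b, 1, 0, 0, 0, z / w * (x + chooseTwo 1 * (w * f)), z / w * y, z, 0, z / w,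
      one_ne_zero, hz, div_ne_zero hz hw, ?_, ?_, ?_, ?_, ?_, ?_, ?_⟩ <;>
      simp only [jZeroNormalForm, hj, hi, hg]
    case refine_5 => linear_combination -hb
    all_goals try field_simp
    all_goals ring
  · obtain ⟨b, l, hl, hb⟩ := exists_mul_eq_oneOr hν (mul_ne_zero hw hi)
    refine ⟨.wi b, 1, -f / i, 0, 0, l * (x + chooseTwo 1 * (w * f)), l * y, l * w, 0, l,
      one_ne_zero, mul_ne_zero hl hw, hl, ?_, ?_, ?_, ?_, ?_, ?_, ?_⟩ <;>
      simp only [jZeroNormalForm, hj, hg]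
    case refine_2 => linear_combination -hb
    all_goals try field_simp
    all_goals ring
  · obtain ⟨b, z, hz, hb⟩ := exists_mul_eq_oneOr hν (mul_ne_zero hw hg)
    have hb0 := oneOr_ne_zero hν b
    refine ⟨.wg b, z, 0, 0, 0, z * x + chooseTwo z * (w * f), z * y + chooseTwo z * (w * g),
      z * w, z * w * (z * f) / oneOr ν b, 1, hz, mul_ne_zero hz hw, one_ne_zero,
      ?_, ?_, ?_, ?_, ?_, ?_, ?_⟩ <;>
      simp only [jZeroNormalForm, hj, hi]
    case refine_4 => linear_combination -hb
    all_goals try field_simp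
    all_goals ring
  · obtain ⟨b, l, hl, hb⟩ := exists_mul_eq_oneOr hν (mul_ne_zero hw hi)
    obtain ⟨c, z, hz, hc⟩ := exists_mul_eq_oneOr hν (mul_ne_zero hw hg)
    refine ⟨.wig b c, z, -z * f / i, 0, 0, l * (z * x + chooseTwo z * (w * f)),
      l * (z * y + chooseTwo z * (w * g)), l * z * w, 0, l, hz,
      mul_ne_zero (mul_ne_zero hl hz) hw, hl, ?_, ?_, ?_, ?_, ?_, ?_, ?_⟩ <;>
      simp only [jZeroNormalForm, hj]
    case refine_2 => linear_combination -z * hb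
    case refine_4 => linear_combination -l * hc
    all_goals try field_simp
    all_goals ring

theorem exists_nonunitRel_jZeroNormalForm_of_i_ne_zero (hν : ¬IsSquare ν) (hj : v.j = 0)
    (hw : v.w = 0) (hi : v.i ≠ 0) :
    ∃ t k s τ r m n q u l, NonunitRel v (jZeroNormalForm ν t) k s τ r m n q u l := by
  obtain ⟨i, j, x, f, y, g, w⟩ := v
  dsimp only at hj hw hi
  by_cases hg : g = 0
  · obtain ⟨b, z, hz, hb⟩ := exists_mul_eq_zeroOrOne y
    refine ⟨.i b, z, -z * f / i, -z * x / i, 0, 0, 0, z / i, 0, 1, hz, div_ne_zero hz hi,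
      one_ne_zero, ?_, ?_, ?_, ?_, ?_, ?_, ?_⟩ <;>
      simp only [jZeroNormalForm, hj, hw, hg]
    case refine_6 => linear_combination -hb
    all_goals try field_simp
    all_goals ring
  · obtain ⟨b, z, hz, hb⟩ := exists_mul_eq_oneOr hν (mul_ne_zero hi hg)
    refine ⟨.ig b, z * i, -(z * f), -(z * x), -y / g, 0, 0, z, 0, 1, mul_ne_zero hz hi, hz,
      one_ne_zero, ?_, ?_, ?_, ?_, ?_, ?_, ?_⟩ <;>
      simp only [jZeroNormalForm, hj, hw]
    case refine_4 => linear_combination -hb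
    all_goals try field_simp
    all_goals ring

theorem exists_nonunitRel_jZeroNormalForm_of_i_eq_zero (hj : v.j = 0)
    (hw : v.w = 0) (hi : v.i = 0) :
    ∃ t k s τ r m n q u l, NonunitRel v (jZeroNormalForm ν t) k s τ r m n q u l := by
  obtain ⟨i, j, x, f, y, g, w⟩ := v
  dsimp only at hj hw hi
  by_cases hg : g = 0 <;> [by_cases hf : f = 0 <;> [by_cases hy : y = 0; skip]; skip]
  · obtain ⟨b, z, hz, hb⟩ := exists_mul_eq_zeroOrOne x
    refine ⟨.x b, 1, 0, 0, 0, 0, 0, 1, 0, z, one_ne_zero, one_ne_zero, hz,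
      ?_, ?_, ?_, ?_, ?_, ?_, ?_⟩ <;>
      simp only [jZeroNormalForm, hj, hw, hi, hg, hf, hy]
    case refine_7 => linear_combination -hb
    all_goals ring
  · refine ⟨.y, y⁻¹, 0, 0, 0, 0, 0, 1, y⁻¹ * x, 1, inv_ne_zero hy, one_ne_zero, one_ne_zero,
      ?_, ?_, ?_, ?_, ?_, ?_, ?_⟩ <;>
      simp only [jZeroNormalForm, hj, hw, hi, hg, hf]
    all_goals try field_simp
    all_goals ring
  · obtain ⟨b, z, hz, hb⟩ := exists_mul_eq_zeroOrOne y
    refine ⟨.f b, z, 0, 0, -x / f, 0, 0, f⁻¹, 0, 1, hz, inv_ne_zero hf, one_ne_zero,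
      ?_, ?_, ?_, ?_, ?_, ?_, ?_⟩ <;>
      simp only [jZeroNormalForm, hj, hw, hi, hg]
    case refine_6 => linear_combination -hb
    all_goals try field_simp
    all_goals ring
  · obtain ⟨b, z, hz, hb⟩ := exists_mul_eq_zeroOrOne (x - y * f / g)
    refine ⟨.g b, 1, 0, 0, -z * y / g, 0, 0, z / g, z / g * f, z, one_ne_zero, div_ne_zero hz hg,
      hz, ?_, ?_, ?_, ?_, ?_, ?_, ?_⟩ <;>
      simp only [jZeroNormalForm, hj, hw, hi]
    case refine_7 => linear_combination -hb
    all_goals try field_simp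
    all_goals ring

theorem exists_nonunitRel_jZeroNormalForm (hν : ¬IsSquare ν) (hj : v.j = 0) :
    ∃ t k s τ r m n q u l, NonunitRel v (jZeroNormalForm ν t) k s τ r m n q u l := by
  by_cases hw : v.w = 0
  · by_cases hi : v.i = 0
    · exact exists_nonunitRel_jZeroNormalForm_of_i_eq_zero hj hw hi
    · exact exists_nonunitRel_jZeroNormalForm_of_i_ne_zero hν hj hw hi
  · exact exists_nonunitRel_jZeroNormalForm_of_w_ne_zero hν hj hw

end NonunitNormalForms

section NormalForms

variable {p : ℕ}

/-- Index set of the normal forms of all parameters. -/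
abbrev NormalFormIndex (p : ℕ) := XOneIndex p ⊕ JOneIndex p ⊕ JZeroIndex

/-- The equivalence between `XOneIndex p` and the disjoint union of the types of the arguments of
its constructors. -/
def xOneIndexEquiv (p : ℕ) :
    XOneIndex p ≃ (ZMod p)ˣ × Bool ⊕ (ZMod p)ˣ ⊕ Bool ⊕ Bool ⊕ Bool ⊕ Bool ⊕ Unit ⊕ Bool where
  toFun
    | .wig i g => .inl (i, g)
    | .wi i => .inr (.inl i)
    | .wg g => .inr (.inr (.inl g))
    | .w f => .inr (.inr (.inr (.inl f)))
    | .ig g => .inr (.inr (.inr (.inr (.inl g))))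
    | .i y => .inr (.inr (.inr (.inr (.inr (.inl y)))))
    | .g => .inr (.inr (.inr (.inr (.inr (.inr (.inl ()))))))
    | .zero y => .inr (.inr (.inr (.inr (.inr (.inr (.inr y))))))
  invFun := Sum.elim (fun a => .wig a.1 a.2) <| Sum.elim .wi <| Sum.elim .wg <| Sum.elim .w <|
    Sum.elim .ig <| Sum.elim .i <| Sum.elim (fun _ => .g) .zero
  left_inv t := by cases t <;> rfl
  right_inv := by rintro (_ | _ | _ | _ | _ | _ | _ | _) <;> rfl

/-- The equivalence between `JOneIndex p` and the disjoint union of the types of the arguments of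
its constructors. -/
def jOneIndexEquiv (p : ℕ) : JOneIndex p ≃ ZMod p ⊕ (ZMod p)ˣ ⊕ Bool where
  toFun
    | .w f => .inl f
    | .f f => .inr (.inl f)
    | .x x => .inr (.inr x)
  invFun := Sum.elim .w <| Sum.elim .f .x
  left_inv t := by cases t <;> rfl
  right_inv := by rintro (_ | _ | _) <;> rfl

/-- The equivalence between `JZeroIndex` and the disjoint union of the types of the arguments of
its constructors. -/
def jZeroIndexEquiv : JZeroIndex ≃
    Bool × Bool ⊕ Bool ⊕ Bool ⊕ Bool ⊕ Bool ⊕ Bool ⊕ Bool ⊕ Bool ⊕ Unit ⊕ Bool where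
  toFun
    | .wig i g => .inl (i, g)
    | .wi i => .inr (.inl i)
    | .wg g => .inr (.inr (.inl g))
    | .w f => .inr (.inr (.inr (.inl f)))
    | .ig g => .inr (.inr (.inr (.inr (.inl g))))
    | .i y => .inr (.inr (.inr (.inr (.inr (.inl y)))))
    | .g x => .inr (.inr (.inr (.inr (.inr (.inr (.inl x))))))
    | .f y => .inr (.inr (.inr (.inr (.inr (.inr (.inr (.inl y)))))))
    | .y => .inr (.inr (.inr (.inr (.inr (.inr (.inr (.inr (.inl ()))))))))
    | .x x => .inr (.inr (.inr (.inr (.inr (.inr (.inr (.inr (.inr x))))))))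
  invFun := Sum.elim (fun a => .wig a.1 a.2) <| Sum.elim .wi <| Sum.elim .wg <| Sum.elim .w <|
    Sum.elim .ig <| Sum.elim .i <| Sum.elim .g <| Sum.elim .f <| Sum.elim (fun _ => .y) .x
  left_inv t := by cases t <;> rfl
  right_inv := by rintro (_ | _ | _ | _ | _ | _ | _ | _ | _ | _) <;> rfl

variable [hp : Fact p.Prime] {ν : ZMod p}

theorem card_normalFormIndex : Nat.card (NormalFormIndex p) = 5 * p + 30 := by
  have hp1 := hp.out.one_le
  rw [Nat.card_congr ((xOneIndexEquiv p).sumCongr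
    ((jOneIndexEquiv p).sumCongr jZeroIndexEquiv))]
  simp only [Nat.card_sum, Nat.card_prod]
  simp only [Nat.card_eq_fintype_card, ZMod.card, ZMod.card_units_eq_totient,
    Nat.totient_prime hp.out, Fintype.card_bool, Fintype.card_unit]
  lia

/-- The normal form of parameters with the given index, for a nonsquare `ν`. -/
def normalForm (ν : ZMod p) : NormalFormIndex p → Params p
  | .inl t => .ofUnit (xOneNormalForm ν t)
  | .inr (.inl t) => .ofNonunit (jOneNormalForm t)
  | .inr (.inr t) => .ofNonunit (jZeroNormalForm ν t)

theorem eq_of_normalForm_equivalent (hp2 : p ≠ 2) (hν : ¬IsSquare ν) {t t' : NormalFormIndex p}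
    (h : (normalForm ν t).Equivalent (normalForm ν t')) : t = t' := by
  have hx := h.reduce_x_eq_zero_iff
  rcases t with t | t | t <;> rcases t' with t' | t' | t'
  · obtain ⟨k, s, r, n, q, u, h⟩ := (Params.ofUnit_equivalent_iff hp2).1 h
    rw [h.eq_of_xOneNormalForm hν]
  any_goals simp [normalForm, Params.ofUnit, Params.ofNonunit] at hx; done
  all_goals obtain ⟨k, s, τ, r, m, n, q, u, l, h⟩ := (Params.ofNonunit_equivalent_iff hp2).1 h
  · rw [h.eq_of_jOneNormalForm]
  · cases t <;> cases t' <;> simpa [jOneNormalForm, jZeroNormalForm] using h.j_eq_zero_iff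
  · cases t <;> cases t' <;> simpa [jOneNormalForm, jZeroNormalForm] using h.j_eq_zero_iff
  · rw [h.eq_of_jZeroNormalForm hν]

theorem exists_equivalent_normalForm (hp5 : 5 ≤ p) (hν : ¬IsSquare ν) (θ : Params p) :
    ∃ t, θ.Equivalent (normalForm ν t) := by
  have hp2 : p ≠ 2 := by lia
  by_cases hx : reduce p θ.x = 0
  · obtain ⟨v, rfl⟩ := Params.exists_eq_ofNonunit hx
    by_cases hj : v.j = 0
    · obtain ⟨t, h⟩ := exists_nonunitRel_jZeroNormalForm hν hj
      exact ⟨.inr (.inr t), (Params.ofNonunit_equivalent_iff hp2).2 h⟩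
    · obtain ⟨t, h⟩ := exists_nonunitRel_jOneNormalForm hj
      exact ⟨.inr (.inl t), (Params.ofNonunit_equivalent_iff hp2).2 h⟩
  · obtain ⟨v, hv⟩ := Params.exists_equivalent_ofUnit hx
    obtain ⟨t, h⟩ := exists_unitRel_xOneNormalForm hν v
    exact ⟨.inl t, hv.trans hp5 ((Params.ofUnit_equivalent_iff hp2).2 h)⟩

end NormalForms

section Counting

/-- The type `X` with the multiplication of `s` as its only one: `Fin N` carries a multiplication of
its own. -/
def WithGroup {X : Type} (_ : Group X) : Type := X

instance {X : Type} (s : Group X) : Group (WithGroup s) := s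

theorem nonempty_withGroup_mulEquiv_equivalence {X : Type} (Q : Group X → Prop) :
    Equivalence fun s t : {s // Q s} => Nonempty (WithGroup s.1 ≃* WithGroup t.1) :=
  ⟨fun _ => ⟨.refl _⟩, fun ⟨f⟩ => ⟨f.symm⟩, fun ⟨f⟩ ⟨g⟩ => ⟨f.trans g⟩⟩

theorem exists_mulEquiv_withGroup {P X : Type} [Group P] (e : P ≃ X) :
    ∃ s : Group X, Nonempty (P ≃* WithGroup s) :=
  ⟨e.symm.group, ⟨letI := e.symm.group; e.symm.mulEquiv.symm⟩⟩

theorem groupClassCount_eq_card {ι : Type*} (P : ι → Type) [∀ t, Group (P t)] {N : ℕ}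
    {Q : Group (Fin N) → Prop} (hcard : ∀ t, Nonempty (P t ≃ Fin N))
    (hP : ∀ t t', Nonempty (P t ≃* P t') → t = t')
    (hQ : ∀ s, Q s ↔ ∃ t, Nonempty (P t ≃* WithGroup s)) :
    groupClassCount N Q = Nat.card ι := by
  have exists_group (t : ι) : ∃ s : {s // Q s}, Nonempty (P t ≃* WithGroup s.1) := by
    obtain ⟨s, ⟨f⟩⟩ := exists_mulEquiv_withGroup (hcard t).some
    exact ⟨⟨s, (hQ s).2 ⟨t, ⟨f⟩⟩⟩, ⟨f⟩⟩
  choose s iso using exists_group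
  refine (Nat.card_eq_of_bijective (fun t => Quot.mk _ (s t)) ⟨fun t t' h => ?_, ?_⟩).symm
  · obtain ⟨f⟩ := (nonempty_withGroup_mulEquiv_equivalence Q).eqvGen_iff.1 (Quot.eqvGen_exact h)
    exact hP t t' ⟨((iso t).some.trans f).trans (iso t').some.symm⟩
  · rintro ⟨s', hs'⟩
    obtain ⟨t, ⟨f⟩⟩ := (hQ s').1 hs'
    have hs : Nonempty (WithGroup (s t).1 ≃* WithGroup s') := ⟨(iso t).some.symm.trans f⟩
    exact ⟨t, Quot.sound hs⟩

variable {p : ℕ} [Fact p.Prime] {e : ℕ}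

theorem isRegularPGroup_and_hasTypeInvariants_iff (hp5 : 5 ≤ p) (he : 4 ≤ e) {G : Type} [Group G]
    (hcard : Nat.card G = p ^ (e + 3)) :
    IsRegularPGroup p G ∧ HasTypeInvariants p G [e, 2, 1] ↔
      ∃ θ : Params p, Nonempty (θ.Extension e G) := by
  constructor
  · rintro ⟨hreg, htype⟩
    have hG : IsPGroup p G := .of_card hcard
    have : Finite G := Nat.finite_of_card_ne_zero (hcard ▸ NeZero.ne _)
    obtain ⟨hcard1, hcard2⟩ := hreg.card_omegaSubgroup_of_hasTypeInvariants hG htype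
    obtain ⟨e, rfl⟩ := Nat.exists_eq_add_of_le' (show 1 ≤ e by lia)
    obtain ⟨a, ha⟩ := hreg.exists_orderOf_eq_of_hasTypeInvariants hG htype
    exact exists_params_extension hreg hG hp5 he hcard hcard1 hcard2 ha
  · rintro ⟨θ, ⟨d⟩⟩
    exact ⟨Params.Extension.isRegularPGroup d hp5, Params.Extension.hasTypeInvariants d hp5 he⟩

theorem groupClassCount_eq_card_normalFormIndex (hp5 : 5 ≤ p) (he : 4 ≤ e) :
    groupClassCount (p ^ (e + 3)) (fun s =>
      IsRegularPGroup p (WithGroup s) ∧ HasTypeInvariants p (WithGroup s) [e, 2, 1]) =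
      Nat.card (NormalFormIndex p) := by
  have hp2 : p ≠ 2 := by lia
  obtain ⟨ν, hν⟩ : ∃ ν : ZMod p, ¬IsSquare ν :=
    FiniteField.exists_nonsquare (by rwa [ZMod.ringChar_zmod_n])
  choose P hP d using fun t => Params.exists_extension hp5 (normalForm ν t) he
  refine groupClassCount_eq_card P (fun t => ?_) (fun t t' ⟨f⟩ => ?_) fun s => ?_
  · have := Params.Extension.finite (d t).some (by lia)
    exact Finite.card_eq.1 (by rw [Nat.card_fin, Params.Extension.card_eq (d t).some (by lia)])
  · exact eq_of_normalForm_equivalent hp2 hν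
      (Params.Extension.equivalent hp5 he ((d t).some.congr f) (d t').some)
  · rw [isRegularPGroup_and_hasTypeInvariants_iff (G := WithGroup s) hp5 he (Nat.card_fin _)]
    constructor
    · rintro ⟨θ, ⟨dθ⟩⟩
      obtain ⟨t, h⟩ := exists_equivalent_normalForm hp5 hν θ
      obtain ⟨dt⟩ := Params.Extension.of_equivalent hp5 he dθ h
      obtain ⟨f, -⟩ := (d t).some.exists_mulEquiv dt
      exact ⟨t, ⟨f⟩⟩
    · rintro ⟨t, ⟨f⟩⟩
      exact ⟨normalForm ν t, ⟨(d t).some.congr f⟩⟩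

end Counting

/-- For every prime `p ≥ 5` and every `n ≥ 7`,
`Ψ_{n-3}^p(2,1) = 5p + 30`. -/
theorem psi_type_21 (p : ℕ) (hp : p.Prime) (hp5 : 5 ≤ p) (n : ℕ) (hn : 7 ≤ n) :
    PsiType p (n - 3) [2, 1] = 5 * p + 30 := by
  have : Fact p.Prime := ⟨hp⟩
  rw [← card_normalFormIndex]
  exact groupClassCount_eq_card_normalFormIndex hp5 (by lia)
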